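/- For every complex number q with 0 < |q| < 1, one has ∑_{i,j,k,l ≥ 0} q^{4i²+4j²+4k²+5l²−4il−4jl+4kl−4l} / ((q⁸;q⁸)_i (q⁸;q⁸)_j (q⁸;q⁸)_k (q⁸;q⁸)_l) = J_8⁷ J_{12,40} J_{16,80} / (J_4⁴ J_16⁴ J_80) + 4q · J_16³ J_{32,80} / J_8⁴. (This is the paper's identity F(1, 1, 1, q^{−1}; q²) = J_2⁷ J_{3,10} J_{4,20}/(J_1⁴ J_4⁴ J_20) + 4q^{1/4} J_4³ J_{8,20}/J_2⁴, with q replaced by q⁴ throughout to clear fractional exponents.) -/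

import Mathlib

open scoped BigOperators

/-- The infinite q-Pochhammer symbol `(a; q)_∞ = ∏_{k=0}^∞ (1 - a q^k)`. -/
noncomputable def qPochInf (a q : ℂ) : ℂ := ∏' n : ℕ, (1 - a * q ^ n)

/-- The finite q-Pochhammer symbol `(a; q)_n = ∏_{k=0}^{n-1} (1 - a q^k)`. -/
noncomputable def qPoch (a q : ℂ) (n : ℕ) : ℂ :=
  Finset.prod (Finset.range n) (fun k => 1 - a * q ^ k)

/-- `J_m = (q^m; q^m)_∞`. -/
noncomputable def J (q : ℂ) (m : ℕ) : ℂ := qPochInf (q ^ m) (q ^ m)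

/-- `J_{a,m} = (q^a; q^m)_∞ (q^{m-a}; q^m)_∞ (q^m; q^m)_∞`. -/
noncomputable def Jam (q : ℂ) (a m : ℕ) : ℂ :=
  qPochInf (q ^ a) (q ^ m) * qPochInf (q ^ (m - a)) (q ^ m) * qPochInf (q ^ m) (q ^ m)

/-!
Euler's series sums the quadruple series over `i`, `j` and `k`, which leaves
`∑_l q^{5l²-4l} / (q⁸; q⁸)_l · (-q^{4-4l}; q⁸)²_∞ (-q^{4+4l}; q⁸)_∞`. The terms with `l` even and
those with `l` odd each form a Slater-type series. Both series come from a Bailey pair: the theta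
series weighted by the kernel `1 / ((q; q)_{a-r} (q; q)_{b+r})` has a closed form by its contiguous
relations in `a` and `b`, and inserting it into a limiting `q`-Gauss sum leaves theta functions.
For odd `l` this is one theta function, hence a product by Jacobi's triple product. For even `l` it
is a difference of two theta functions, which the quintuple product identity turns into a product.
-/

open Filter Topology

section QPochhammer

variable {q : ℂ}

lemma norm_pow_lt_one (hq1 : ‖q‖ < 1) {m : ℕ} (hm : m ≠ 0) : ‖q ^ m‖ < 1 := by
  rw [norm_pow]
  exact pow_lt_one₀ (norm_nonneg q) hq1 hm

@[simp]
lemma qPoch_zero (a q : ℂ) : qPoch a q 0 = 1 := rfl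

lemma qPoch_succ (a q : ℂ) (n : ℕ) : qPoch a q (n + 1) = qPoch a q n * (1 - a * q ^ n) :=
  Finset.prod_range_succ _ n

lemma qPoch_add (a q : ℂ) (m n : ℕ) :
    qPoch a q (m + n) = qPoch a q m * qPoch (a * q ^ m) q n := by
  simp only [qPoch, Finset.prod_range_add, pow_add, mul_assoc]

lemma qPoch_mul_eq_prod (a q : ℂ) (m n : ℕ) :
    qPoch a q (m * n) = ∏ i ∈ Finset.range m, qPoch (a * q ^ i) (q ^ m) n := by
  induction n with
  | zero => simp
  | succ n ih =>
    simp only [Nat.mul_succ, qPoch_add, ih, qPoch_succ, Finset.prod_mul_distrib]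
    congr 1
    refine Finset.prod_congr rfl fun i _ ↦ ?_
    ring

lemma qPoch_ne_zero {a : ℂ} (h : ∀ n : ℕ, 1 - a * q ^ n ≠ 0) (n : ℕ) : qPoch a q n ≠ 0 :=
  Finset.prod_ne_zero_iff.mpr fun k _ ↦ h k

lemma one_sub_mul_pow_ne_zero (hq1 : ‖q‖ < 1) {a : ℂ} (ha : ‖a‖ < 1) (n : ℕ) :
    1 - a * q ^ n ≠ 0 := by
  intro h
  have hlt : ‖a * q ^ n‖ < 1 := by
    rw [norm_mul, norm_pow]
    exact mul_lt_one_of_nonneg_of_lt_one_left (norm_nonneg a) ha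
      (pow_le_one₀ (norm_nonneg q) hq1.le)
  rw [← sub_eq_zero.mp h, norm_one] at hlt
  exact lt_irrefl 1 hlt

lemma summable_norm_mul_pow (hq1 : ‖q‖ < 1) (a : ℂ) : Summable fun n : ℕ ↦ ‖-(a * q ^ n)‖ := by
  simpa using (summable_geometric_of_lt_one (norm_nonneg q) hq1).mul_left ‖a‖

lemma tendsto_qPoch (hq1 : ‖q‖ < 1) (a : ℂ) :
    Tendsto (qPoch a q) atTop (𝓝 (qPochInf a q)) := by
  have hmul : Multipliable fun n : ℕ ↦ 1 - a * q ^ n := by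
    simpa only [sub_eq_add_neg] using multipliable_one_add_of_summable (summable_norm_mul_pow hq1 a)
  exact hmul.hasProd.tendsto_prod_nat

lemma qPochInf_ne_zero (hq1 : ‖q‖ < 1) {a : ℂ} (h : ∀ n : ℕ, 1 - a * q ^ n ≠ 0) :
    qPochInf a q ≠ 0 := by
  simp only [sub_eq_add_neg] at h
  simpa only [qPochInf, sub_eq_add_neg] using
    tprod_one_add_ne_zero_of_summable h (summable_norm_mul_pow hq1 a)

lemma qPochInf_ne_zero_of_norm_lt_one (hq1 : ‖q‖ < 1) {a : ℂ} (ha : ‖a‖ < 1) :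
    qPochInf a q ≠ 0 :=
  qPochInf_ne_zero hq1 (one_sub_mul_pow_ne_zero hq1 ha)

lemma tendsto_inv_qPoch (hq1 : ‖q‖ < 1) {a : ℂ} (h : ∀ n : ℕ, 1 - a * q ^ n ≠ 0) :
    Tendsto (fun n ↦ (qPoch a q n)⁻¹) atTop (𝓝 (qPochInf a q)⁻¹) :=
  (tendsto_qPoch hq1 a).inv₀ (qPochInf_ne_zero hq1 h)

lemma exists_norm_inv_qPoch_le (hq1 : ‖q‖ < 1) {a : ℂ} (h : ∀ n : ℕ, 1 - a * q ^ n ≠ 0) :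
    ∃ C, ∀ n, ‖(qPoch a q n)⁻¹‖ ≤ C := by
  obtain ⟨C, hC⟩ := (tendsto_inv_qPoch hq1 h).norm.bddAbove_range
  exact ⟨C, fun n ↦ hC ⟨n, rfl⟩⟩

@[simp]
lemma qPochInf_zero_left (q : ℂ) : qPochInf 0 q = 1 := by
  simp [qPochInf]

lemma qPochInf_eq_qPoch_mul (hq1 : ‖q‖ < 1) (a : ℂ) (m : ℕ) :
    qPochInf a q = qPoch a q m * qPochInf (a * q ^ m) q := by
  have htail := (tendsto_qPoch hq1 (a * q ^ m)).const_mul (qPoch a q m)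
  simp only [← qPoch_add, add_comm m] at htail
  exact tendsto_nhds_unique ((tendsto_add_atTop_iff_nat m).mpr (tendsto_qPoch hq1 a)) htail

lemma qPochInf_one_left (hq1 : ‖q‖ < 1) : qPochInf 1 q = 0 := by
  rw [qPochInf_eq_qPoch_mul hq1 1 1, qPoch_succ]
  simp

lemma qPochInf_neg_one_left (hq1 : ‖q‖ < 1) : qPochInf (-1) q = 2 * qPochInf (-q) q := by
  rw [qPochInf_eq_qPoch_mul hq1 (-1) 1, qPoch_succ]
  norm_num

lemma qPochInf_eq_prod_residues (hq1 : ‖q‖ < 1) (a : ℂ) {m : ℕ} (hm : m ≠ 0) :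
    qPochInf a q = ∏ i ∈ Finset.range m, qPochInf (a * q ^ i) (q ^ m) := by
  have hsub := (tendsto_qPoch hq1 a).comp
    (tendsto_id.const_mul_atTop' (Nat.pos_of_ne_zero hm))
  have hprod := tendsto_finsetProd (Finset.range m) fun i _ ↦
    tendsto_qPoch (norm_pow_lt_one hq1 hm) (a * q ^ i)
  refine tendsto_nhds_unique hsub (hprod.congr fun n ↦ ?_)
  exact (qPoch_mul_eq_prod a q m n).symm

lemma qPochInf_mul_qPochInf_neg (hq1 : ‖q‖ < 1) (a : ℂ) :
    qPochInf a q * qPochInf (-a) q = qPochInf (a ^ 2) (q ^ 2) := by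
  refine tendsto_nhds_unique ((tendsto_qPoch hq1 a).mul (tendsto_qPoch hq1 (-a)))
    ((tendsto_qPoch (norm_pow_lt_one hq1 two_ne_zero) (a ^ 2)).congr fun n ↦ ?_)
  simp only [qPoch, ← Finset.prod_mul_distrib]
  refine Finset.prod_congr rfl fun k _ ↦ ?_
  ring

lemma qPochInf_neg_self_mul (hq1 : ‖q‖ < 1) :
    qPochInf (-q) q * qPochInf q q = qPochInf (q ^ 2) (q ^ 2) := by
  rw [mul_comm, qPochInf_mul_qPochInf_neg hq1]

lemma qPochInf_neg_sq_mul (hq1 : ‖q‖ < 1) :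
    qPochInf (-q) (q ^ 2) * (qPochInf q q * qPochInf (q ^ 4) (q ^ 4)) =
      qPochInf (q ^ 2) (q ^ 2) ^ 2 := by
  have hsplit : ∀ p : ℂ, ‖p‖ < 1 →
      qPochInf p p = qPochInf p (p ^ 2) * qPochInf (p ^ 2) (p ^ 2) := fun p hp ↦ by
    simp [qPochInf_eq_prod_residues hp p two_ne_zero, Finset.prod_range_succ, sq]
  have hq2 := norm_pow_lt_one hq1 two_ne_zero
  have hpair := qPochInf_mul_qPochInf_neg hq2 q
  have hq2_split := hsplit (q ^ 2) hq2
  rw [← pow_mul] at hpair hq2_split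
  rw [hsplit q hq1]
  linear_combination qPochInf (q ^ 2) (q ^ 2) * qPochInf (q ^ 4) (q ^ 4) * hpair -
    qPochInf (q ^ 2) (q ^ 2) * hq2_split

lemma qPoch_div_pow {z : ℂ} (hz : z ≠ 0) (hq : q ≠ 0) (m : ℕ) :
    qPoch (z / q ^ m) q m = (-z) ^ m / (∏ i ∈ Finset.range m, q ^ (i + 1)) * qPoch (q / z) q m := by
  have hfactor : ∀ i ∈ Finset.range m,
      1 - z / q ^ m * q ^ (m - 1 - i) = -z / q ^ (i + 1) * (1 - q / z * q ^ i) := fun i hi ↦ by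
    have hm : m = m - 1 - i + (i + 1) := by have := Finset.mem_range.mp hi; omega
    have hpow : q ^ m = q ^ (m - 1 - i) * q ^ (i + 1) := by rw [← pow_add, ← hm]
    rw [hpow]
    field_simp
    ring
  rw [qPoch, ← Finset.prod_range_reflect, Finset.prod_congr rfl hfactor, Finset.prod_mul_distrib,
    Finset.prod_div_distrib, Finset.prod_const, Finset.card_range, qPoch]

lemma prod_range_pow_succ_sq (q : ℂ) (m : ℕ) :
    (∏ i ∈ Finset.range m, q ^ (i + 1)) ^ 2 = q ^ (m * (m + 1)) := by
  rw [Finset.prod_pow_eq_pow_sum, ← pow_mul, Finset.sum_add_distrib, add_mul,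
    Finset.sum_range_id_mul_two]
  congr 1
  cases m with
  | zero => rfl
  | succ m =>
    simp only [Finset.sum_const, Finset.card_range, smul_eq_mul, Nat.add_sub_cancel]
    ring

lemma qPochInf_div_pow_sq_mul {z : ℂ} (hz : z ≠ 0) (hq : q ≠ 0) (hq1 : ‖q‖ < 1) (m : ℕ) :
    qPochInf (z / q ^ m) q ^ 2 * qPochInf (q / z * q ^ m) q =
      z ^ (2 * m) / q ^ (m * (m + 1)) * qPoch (q / z) q m *
        (qPochInf z q ^ 2 * qPochInf (q / z) q) := by
  rw [qPochInf_eq_qPoch_mul hq1 (z / q ^ m) m, qPochInf_eq_qPoch_mul hq1 (q / z) m,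
    div_mul_cancel₀ z (pow_ne_zero m hq), qPoch_div_pow hz hq, ← prod_range_pow_succ_sq,
    pow_mul, ← neg_sq z, ← pow_mul]
  ring

end QPochhammer

section QGauss

variable {q : ℂ}

lemma summable_of_succ_eq_mul {f g : ℕ → ℂ} (hg : Tendsto g atTop (𝓝 0))
    (h : ∀ n, f (n + 1) = g n * f n) : Summable f := by
  refine summable_of_ratio_norm_eventually_le (r := 1 / 2) (by norm_num) ?_
  have hsmall : ∀ᶠ n in atTop, ‖g n‖ < 1 / 2 :=
    hg.norm.eventually (gt_mem_nhds (by norm_num))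
  filter_upwards [hsmall] with n hn
  rw [h, norm_mul]
  gcongr

/-- The polynomial form `∏_{i<m} (c qⁱ - b) qⁱ` of `(-b)^m q^{m(m-1)/2} (c/b; q)_m`, which remains
meaningful for `b = 0`. -/
noncomputable def cauchyCoeff (b c q : ℂ) (m : ℕ) : ℂ :=
  ∏ i ∈ Finset.range m, ((c * q ^ i - b) * q ^ i)

@[simp]
lemma cauchyCoeff_zero (b c q : ℂ) : cauchyCoeff b c q 0 = 1 := rfl

lemma cauchyCoeff_succ (b c q : ℂ) (m : ℕ) :
    cauchyCoeff b c q (m + 1) = cauchyCoeff b c q m * ((c * q ^ m - b) * q ^ m) :=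
  Finset.prod_range_succ _ m

lemma cauchyCoeff_add (b c q : ℂ) (m n : ℕ) :
    cauchyCoeff b c q (m + n) =
      cauchyCoeff b c q m * cauchyCoeff (b * q ^ m) (c * q ^ (2 * m)) q n := by
  simp only [cauchyCoeff, Finset.prod_range_add]
  congr 1
  refine Finset.prod_congr rfl fun i _ ↦ ?_
  ring

lemma summable_cauchyCoeff (hq1 : ‖q‖ < 1) (b c : ℂ) : Summable (cauchyCoeff b c q) := by
  have hpow := tendsto_pow_atTop_nhds_zero_of_norm_lt_one hq1
  refine summable_of_succ_eq_mul (g := fun m ↦ (c * q ^ m - b) * q ^ m) ?_ fun m ↦ ?_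
  · simpa using ((hpow.const_mul c).sub_const b).mul hpow
  · rw [cauchyCoeff_succ, mul_comm]

/-- The general term of the limiting `q`-Gauss series whose parameters are shifted `N` times,
normalised by `(c; q)_{N+m}`. -/
noncomputable def gaussTerm (b c q : ℂ) (N m : ℕ) : ℂ :=
  q ^ (N * m) * cauchyCoeff b c q m / (qPoch q q m * qPoch c q (N + m))

lemma exists_norm_gaussTerm_le (hq1 : ‖q‖ < 1) (b : ℂ) {c : ℂ} (hc : ∀ n : ℕ, 1 - c * q ^ n ≠ 0) :
    ∃ C, ∀ N m, ‖gaussTerm b c q N m‖ ≤ ‖cauchyCoeff b c q m‖ * C := by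
  obtain ⟨C₁, hC₁⟩ := exists_norm_inv_qPoch_le hq1 (one_sub_mul_pow_ne_zero hq1 hq1)
  obtain ⟨C₂, hC₂⟩ := exists_norm_inv_qPoch_le hq1 hc
  have hC₁_nonneg := (norm_nonneg _).trans (hC₁ 0)
  refine ⟨C₁ * C₂, fun N m ↦ ?_⟩
  have hpow : ‖q ^ (N * m)‖ ≤ 1 := by
    rw [norm_pow]
    exact pow_le_one₀ (norm_nonneg q) hq1.le
  calc ‖gaussTerm b c q N m‖
      = ‖q ^ (N * m)‖ * ‖cauchyCoeff b c q m‖ *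
          (‖(qPoch q q m)⁻¹‖ * ‖(qPoch c q (N + m))⁻¹‖) := by
        simp only [gaussTerm, div_eq_mul_inv, mul_inv, norm_mul]
    _ ≤ 1 * ‖cauchyCoeff b c q m‖ * (C₁ * C₂) := by
        gcongr
        exacts [hC₁ m, hC₂ _]
    _ = ‖cauchyCoeff b c q m‖ * (C₁ * C₂) := by rw [one_mul]

lemma summable_gaussTerm (hq1 : ‖q‖ < 1) (b : ℂ) {c : ℂ} (hc : ∀ n : ℕ, 1 - c * q ^ n ≠ 0)
    (N : ℕ) : Summable (gaussTerm b c q N) := by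
  obtain ⟨C, hC⟩ := exists_norm_gaussTerm_le hq1 b hc
  exact .of_norm_bounded ((summable_cauchyCoeff hq1 b c).norm.mul_right C) (hC N)

lemma gaussTerm_succ_left {c : ℂ} (hc : ∀ n : ℕ, 1 - c * q ^ n ≠ 0) (b : ℂ) (N m : ℕ) :
    (1 - c * q ^ (N + m)) * gaussTerm b c q (N + 1) m = q ^ m * gaussTerm b c q N m := by
  rw [gaussTerm, gaussTerm, add_right_comm N 1 m, qPoch_succ c, add_mul, one_mul,
    pow_add q (N * m),
    mul_comm (qPoch c q (N + m)), ← mul_assoc, mul_comm (qPoch q q m), mul_assoc _ (qPoch q q m),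
    ← mul_div_assoc, mul_div_mul_left _ _ (hc _)]
  ring

lemma gaussTerm_succ_right (hq1 : ‖q‖ < 1) {c : ℂ} (hc : ∀ n : ℕ, 1 - c * q ^ n ≠ 0) (b : ℂ)
    (N m : ℕ) :
    (1 - q ^ (m + 1)) * (1 - c * q ^ (N + m)) * gaussTerm b c q N (m + 1) =
      q ^ (N + m) * (c * q ^ m - b) * gaussTerm b c q N m := by
  have hq_factor := one_sub_mul_pow_ne_zero hq1 hq1 m
  rw [← pow_succ'] at hq_factor
  rw [gaussTerm, gaussTerm, ← add_assoc, qPoch_succ c, qPoch_succ q, cauchyCoeff_succ, ← pow_succ',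
    mul_mul_mul_comm (qPoch q q m), mul_comm (qPoch q q m * _), ← mul_div_assoc,
    mul_div_mul_left _ _ (mul_ne_zero hq_factor (hc _))]
  ring

/-- With `v_m = (1 - q^m) t_m`, the shift in `N` changes the general term `t_m` by the telescoping
amount `v_m - v_{m+1}`. -/
lemma tsum_gaussTerm_eq (hq1 : ‖q‖ < 1) {c : ℂ} (hc : ∀ n : ℕ, 1 - c * q ^ n ≠ 0) (b : ℂ) (N : ℕ) :
    ∑' m, gaussTerm b c q N m = (1 - b * q ^ N) * ∑' m, gaussTerm b c q (N + 1) m := by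
  have hs := summable_gaussTerm hq1 b hc N
  have hs' := (summable_gaussTerm hq1 b hc (N + 1)).mul_left (1 - b * q ^ N)
  let v : ℕ → ℂ := fun m ↦ (1 - q ^ m) * gaussTerm b c q N m
  have hdiff : ∀ m,
      gaussTerm b c q N m - (1 - b * q ^ N) * gaussTerm b c q (N + 1) m = v m - v (m + 1) := by
    intro m
    refine mul_left_cancel₀ (hc (N + m)) ?_
    linear_combination (-(1 - b * q ^ N)) * gaussTerm_succ_left hc b N m +
      gaussTerm_succ_right hq1 hc b N m
  have hv : Tendsto v atTop (𝓝 0) := by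
    simpa using ((tendsto_pow_atTop_nhds_zero_of_norm_lt_one hq1).const_sub 1).mul
      hs.tendsto_atTop_zero
  have htelescope := (hs.sub hs').hasSum.tendsto_sum_nat
  simp only [hdiff, Finset.sum_range_sub'] at htelescope
  have hlim : Tendsto (fun n ↦ v 0 - v n) atTop (𝓝 0) := by
    simpa [v] using hv.const_sub (v 0)
  rw [← tsum_mul_left, ← sub_eq_zero, ← hs.tsum_sub hs', tsum_congr hdiff]
  exact tendsto_nhds_unique htelescope hlim

lemma tsum_gaussTerm_zero_eq_qPoch_mul (hq1 : ‖q‖ < 1) {c : ℂ} (hc : ∀ n : ℕ, 1 - c * q ^ n ≠ 0)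
    (b : ℂ) (N : ℕ) :
    ∑' m, gaussTerm b c q 0 m = qPoch b q N * ∑' m, gaussTerm b c q N m := by
  induction N with
  | zero => simp
  | succ N ih => rw [ih, qPoch_succ, tsum_gaussTerm_eq hq1 hc, mul_assoc]

lemma tendsto_tsum_gaussTerm (hq1 : ‖q‖ < 1) {c : ℂ} (hc : ∀ n : ℕ, 1 - c * q ^ n ≠ 0) (b : ℂ) :
    Tendsto (fun N ↦ ∑' m, gaussTerm b c q N m) atTop (𝓝 (qPochInf c q)⁻¹) := by
  obtain ⟨C, hC⟩ := exists_norm_gaussTerm_le hq1 b hc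
  have hterm : ∀ m, Tendsto (fun N ↦ gaussTerm b c q N m) atTop
      (𝓝 (if m = 0 then (qPochInf c q)⁻¹ else 0)) := by
    intro m
    have hc_inv := (tendsto_add_atTop_iff_nat m).mpr (tendsto_inv_qPoch hq1 hc)
    obtain rfl | hm := eq_or_ne m 0
    · simpa [gaussTerm] using hc_inv
    · have hpow := tendsto_pow_atTop_nhds_zero_of_norm_lt_one (norm_pow_lt_one hq1 hm)
      have := (hpow.mul_const (cauchyCoeff b c q m / qPoch q q m)).mul hc_inv
      simp only [zero_mul] at this
      simp only [if_neg hm]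
      refine this.congr fun N ↦ ?_
      rw [gaussTerm, mul_comm N m, pow_mul]
      ring
  simpa using tendsto_tsum_of_dominated_convergence
    ((summable_cauchyCoeff hq1 b c).norm.mul_right C) hterm (.of_forall hC)

/-- The limiting case `a → ∞` of Heine's `q`-Gauss sum. -/
theorem tsum_cauchyCoeff_div (hq1 : ‖q‖ < 1) {c : ℂ} (hc : ∀ n : ℕ, 1 - c * q ^ n ≠ 0) (b : ℂ) :
    ∑' m, cauchyCoeff b c q m / (qPoch q q m * qPoch c q m) = qPochInf b q / qPochInf c q := by
  have hlim := (tendsto_qPoch hq1 b).mul (tendsto_tsum_gaussTerm hq1 hc b)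
  simp only [← tsum_gaussTerm_zero_eq_qPoch_mul hq1 hc, tendsto_const_nhds_iff] at hlim
  simpa [gaussTerm, div_eq_mul_inv] using hlim

lemma cauchyCoeff_zero_right {p : ℂ} (z : ℂ) (m : ℕ) :
    cauchyCoeff (-(p * z)) 0 (p ^ 2) m = p ^ (m ^ 2) * z ^ m := by
  induction m with
  | zero => simp
  | succ m ih =>
    rw [cauchyCoeff_succ, ih]
    ring

/-- The summand of Euler's series for `(-pz; p²)_∞`. -/
noncomputable def eulerTerm (p z : ℂ) (m : ℕ) : ℂ := p ^ (m ^ 2) * z ^ m / qPoch (p ^ 2) (p ^ 2) m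

theorem hasSum_eulerTerm {p : ℂ} (hp1 : ‖p‖ < 1) (z : ℂ) :
    HasSum (eulerTerm p z) (qPochInf (-(p * z)) (p ^ 2)) := by
  have hp21 := norm_pow_lt_one hp1 two_ne_zero
  have hsummable : Summable (eulerTerm p z) :=
    (summable_gaussTerm hp21 (-(p * z)) (c := 0) (by simp) 0).congr fun m ↦ by
      simp [gaussTerm, eulerTerm, cauchyCoeff_zero_right, qPoch]
  have hsum := tsum_cauchyCoeff_div hp21 (c := 0) (by simp) (-(p * z))
  rw [hsummable.hasSum_iff]
  simpa [eulerTerm, cauchyCoeff_zero_right, qPoch] using hsum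

end QGauss

section BaileyKernel

variable {q : ℂ}

/-- The reciprocal `1 / (q; q)_m` for integral `m`, with the usual convention that it vanishes for
`m < 0`. -/
noncomputable def qPochInv (q : ℂ) : ℤ → ℂ
  | Int.ofNat m => (qPoch q q m)⁻¹
  | Int.negSucc _ => 0

lemma qPochInv_natCast (q : ℂ) (m : ℕ) : qPochInv q m = (qPoch q q m)⁻¹ := rfl

@[simp]
lemma qPochInv_zero (q : ℂ) : qPochInv q 0 = 1 := inv_one

lemma qPochInv_of_neg (q : ℂ) {m : ℤ} (hm : m < 0) : qPochInv q m = 0 := by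
  obtain ⟨n, rfl⟩ := Int.eq_negSucc_of_lt_zero hm
  rfl

lemma qPochInv_sub_one (hq1 : ‖q‖ < 1) (m : ℤ) :
    qPochInv q (m - 1) = (1 - q ^ m) * qPochInv q m := by
  rcases lt_trichotomy m 0 with hm | rfl | hm
  · rw [qPochInv_of_neg q hm, qPochInv_of_neg q (by lia), mul_zero]
  · rw [qPochInv_of_neg q (by lia), zpow_zero, sub_self, zero_mul]
  · obtain ⟨n, rfl⟩ := Int.eq_succ_of_zero_lt hm
    have hne := one_sub_mul_pow_ne_zero hq1 hq1 n
    rw [← Nat.cast_succ, Nat.cast_succ, add_sub_cancel_right, ← Nat.cast_succ, zpow_natCast,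
      qPochInv_natCast, qPochInv_natCast, qPoch_succ, pow_succ', mul_inv_rev,
      mul_inv_cancel_left₀ hne]

lemma exists_norm_qPochInv_le (hq1 : ‖q‖ < 1) : ∃ C, ∀ m, ‖qPochInv q m‖ ≤ C := by
  obtain ⟨C, hC⟩ := exists_norm_inv_qPoch_le hq1 (one_sub_mul_pow_ne_zero hq1 hq1)
  refine ⟨C, fun m ↦ ?_⟩
  cases m with
  | ofNat m => exact hC m
  | negSucc m => exact norm_zero.trans_le ((norm_nonneg _).trans (hC 0))

lemma tendsto_qPochInv (hq1 : ‖q‖ < 1) : Tendsto (qPochInv q) atTop (𝓝 (qPochInf q q)⁻¹) := by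
  rw [← Nat.map_cast_int_atTop, tendsto_map'_iff]
  exact tendsto_inv_qPoch hq1 (one_sub_mul_pow_ne_zero hq1 hq1)

/-- The Bailey kernel `1 / ((q; q)_{a-r} (q; q)_{b+r})`. -/
noncomputable def baileyKernel (q : ℂ) (a b r : ℤ) : ℂ :=
  qPochInv q (a - r) * qPochInv q (b + r)

lemma baileyKernel_neg (q : ℂ) (a b r : ℤ) : baileyKernel q a b (-r) = baileyKernel q b a r := by
  rw [baileyKernel, sub_neg_eq_add, ← sub_eq_add_neg, mul_comm, baileyKernel]

lemma baileyKernel_add (q : ℂ) (a b r s : ℤ) :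
    baileyKernel q a b (r + s) = baileyKernel q (a - s) (b + s) r := by
  rw [baileyKernel, baileyKernel, add_comm r s, sub_sub, add_assoc]

lemma baileyKernel_sub (q : ℂ) (a b r s : ℤ) :
    baileyKernel q a b (r - s) = baileyKernel q (a + s) (b - s) r := by
  rw [sub_eq_add_neg, baileyKernel_add, sub_neg_eq_add, ← sub_eq_add_neg]

lemma baileyKernel_sub_one (hq1 : ‖q‖ < 1) (a b r : ℤ) :
    baileyKernel q a (b - 1) r = (1 - q ^ (b + r)) * baileyKernel q a b r := by
  rw [baileyKernel, sub_add_eq_add_sub, qPochInv_sub_one hq1, baileyKernel, mul_left_comm]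

lemma baileyKernel_of_lt (q : ℂ) {a r : ℤ} (h : a < r) (b : ℤ) : baileyKernel q a b r = 0 := by
  rw [baileyKernel, qPochInv_of_neg q (sub_neg.mpr h), zero_mul]

lemma exists_norm_baileyKernel_le (hq1 : ‖q‖ < 1) : ∃ C, ∀ a b r, ‖baileyKernel q a b r‖ ≤ C := by
  obtain ⟨C, hC⟩ := exists_norm_qPochInv_le hq1
  refine ⟨C * C, fun a b r ↦ ?_⟩
  rw [baileyKernel, norm_mul]
  exact mul_le_mul (hC _) (hC _) (norm_nonneg _) ((norm_nonneg _).trans (hC 0))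

lemma summable_mul_baileyKernel {ι : Type*} {f : ι → ℂ} (hf : Summable f) (hq1 : ‖q‖ < 1)
    (a b r : ι → ℤ) : Summable fun i ↦ f i * baileyKernel q (a i) (b i) (r i) := by
  obtain ⟨C, hC⟩ := exists_norm_baileyKernel_le hq1
  refine .of_norm_bounded (hf.norm.mul_right C) fun i ↦ ?_
  rw [norm_mul]
  gcongr
  exact hC _ _ _

lemma tendsto_tsum_mul_baileyKernel {ι : Type*} {f : ι → ℂ} (hf : Summable f) (hq1 : ‖q‖ < 1)
    (r : ι → ℤ) : Tendsto (fun n : ℤ ↦ ∑' i, f i * baileyKernel q n n (r i)) atTop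
      (𝓝 ((∑' i, f i) * ((qPochInf q q)⁻¹ * (qPochInf q q)⁻¹))) := by
  obtain ⟨C, hC⟩ := exists_norm_baileyKernel_le hq1
  rw [← tsum_mul_right]
  refine tendsto_tsum_of_dominated_convergence (hf.norm.mul_right C) (fun i ↦ ?_)
    (.of_forall fun n i ↦ ?_)
  · exact (((tendsto_qPochInv hq1).comp (tendsto_atTop_add_const_right _ (-r i) tendsto_id)).mul
      ((tendsto_qPochInv hq1).comp (tendsto_atTop_add_const_right _ (r i) tendsto_id))).const_mul _
  · rw [norm_mul]
    gcongr
    exact hC _ _ _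

end BaileyKernel

section Theta

variable {q z : ℂ}

/-- The general term `(-z)^r q^{r(r-1)/2}` of the bilateral theta series. -/
noncomputable def thetaTerm (z q : ℂ) (r : ℤ) : ℂ :=
  (-z) ^ r * q ^ (r * (r - 1) / 2)

lemma two_mul_mul_sub_one_ediv_two (r : ℤ) : 2 * (r * (r - 1) / 2) = r * (r - 1) :=
  Int.mul_ediv_cancel' (Int.even_mul_pred_self r).two_dvd

@[simp]
lemma thetaTerm_zero (z q : ℂ) : thetaTerm z q 0 = 1 := by
  simp [thetaTerm]

lemma thetaTerm_mul_zpow (z q w : ℂ) (r : ℤ) : thetaTerm z q r * w ^ r = thetaTerm (z * w) q r := by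
  rw [thetaTerm, thetaTerm, neg_mul_eq_neg_mul, mul_zpow]
  ring

lemma thetaTerm_mul_zpow_mul_sub_one (z q w : ℂ) (r : ℤ) :
    thetaTerm z q r * w ^ (r * (r - 1)) = thetaTerm z (q * w ^ 2) r := by
  rw [thetaTerm, thetaTerm, mul_zpow, mul_assoc, ← zpow_ofNat w 2, ← zpow_mul,
    two_mul_mul_sub_one_ediv_two]

lemma thetaTerm_add (hz : z ≠ 0) (hq : q ≠ 0) (r s : ℤ) :
    thetaTerm z q (r + s) = thetaTerm z q s * thetaTerm (z * q ^ s) q r := by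
  have hexp : (r + s) * (r + s - 1) / 2 = s * (s - 1) / 2 + (s * r + r * (r - 1) / 2) := by
    have := two_mul_mul_sub_one_ediv_two
    linarith [this r, this s, this (r + s)]
  rw [thetaTerm, thetaTerm, thetaTerm, hexp, zpow_add₀ (neg_ne_zero.mpr hz), zpow_add₀ hq,
    zpow_add₀ hq, neg_mul_eq_neg_mul, mul_zpow, ← zpow_mul]
  ring

lemma thetaTerm_one (z q : ℂ) : thetaTerm z q 1 = -z := by
  simp [thetaTerm]

lemma thetaTerm_two (z q : ℂ) : thetaTerm z q 2 = z ^ 2 * q := by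
  simp [thetaTerm]

lemma thetaTerm_three (z q : ℂ) : thetaTerm z q 3 = -(z ^ 3 * q ^ 3) := by
  rw [thetaTerm, zpow_ofNat, Odd.neg_pow (by decide), neg_mul]
  norm_num

lemma thetaTerm_succ (hz : z ≠ 0) (hq : q ≠ 0) (r : ℤ) :
    thetaTerm z q (r + 1) = -z * q ^ r * thetaTerm z q r := by
  rw [add_comm, thetaTerm_add hz hq, thetaTerm_one]
  ring

lemma thetaTerm_neg (hq : q ≠ 0) (z : ℂ) (r : ℤ) :
    thetaTerm z q (-r) = thetaTerm (q / z) q r := by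
  have hexp : -r * (-r - 1) / 2 = r + r * (r - 1) / 2 := by
    have := two_mul_mul_sub_one_ediv_two
    linarith [this r, this (-r)]
  rw [thetaTerm, thetaTerm, hexp, zpow_add₀ hq, zpow_neg, ← inv_zpow, ← mul_assoc, ← mul_zpow,
    inv_neg, neg_mul, inv_mul_eq_div]

lemma summable_thetaTerm (hz : z ≠ 0) (hq : q ≠ 0) (hq1 : ‖q‖ < 1) : Summable (thetaTerm z q) := by
  have hnat : ∀ w ≠ 0, Summable fun n : ℕ ↦ thetaTerm w q n := fun w hw ↦ by
    refine summable_of_succ_eq_mul (g := fun n ↦ -w * q ^ n) ?_ fun n ↦ ?_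
    · simpa using (tendsto_pow_atTop_nhds_zero_of_norm_lt_one hq1).const_mul (-w)
    · rw [Nat.cast_succ, thetaTerm_succ hw hq, zpow_natCast]
  refine .of_nat_of_neg (hnat z hz) ?_
  simpa only [thetaTerm_neg hq z] using hnat (q / z) (div_ne_zero hq hz)

/-- The theta function `∑_r (-z)^r q^{r(r-1)/2}`. -/
noncomputable def qTheta (z q : ℂ) : ℂ := ∑' r : ℤ, thetaTerm z q r

lemma qTheta_div_left (hq : q ≠ 0) (z : ℂ) : qTheta (q / z) q = qTheta z q := by
  simp only [qTheta, ← thetaTerm_neg hq z]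
  exact (Equiv.neg ℤ).tsum_eq _

lemma qTheta_eq_thetaTerm_mul (hz : z ≠ 0) (hq : q ≠ 0) (s : ℤ) :
    qTheta z q = thetaTerm z q s * qTheta (z * q ^ s) q := by
  rw [qTheta, ← (Equiv.addRight s).tsum_eq, qTheta, ← tsum_mul_left]
  exact tsum_congr fun r ↦ thetaTerm_add hz hq r s

lemma qTheta_eq_neg_mul (hz : z ≠ 0) (hq : q ≠ 0) : qTheta z q = -z * qTheta (z * q) q := by
  rw [qTheta_eq_thetaTerm_mul hz hq 1, thetaTerm_one, zpow_one]

end Theta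

section ThetaBaileySum

variable {q p z : ℂ}

/-- The theta series `∑_k (-z)^k p^{k(k-1)/2}` weighted by the Bailey kernel at `d k`. As a
function of `a` and `b` it is one side of a Bailey pair with respect to the sequence `k ↦ d k`. -/
noncomputable def thetaBaileySum (q p z : ℂ) (d a b : ℤ) : ℂ :=
  ∑' k : ℤ, thetaTerm z p k * baileyKernel q a b (d * k)

lemma thetaBaileySum_reflect (hp : p ≠ 0) (q z : ℂ) (d a b : ℤ) :
    thetaBaileySum q p z d a b = thetaBaileySum q p (p / z) d b a := by
  rw [thetaBaileySum, ← (Equiv.neg ℤ).tsum_eq]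
  refine tsum_congr fun k ↦ ?_
  rw [Equiv.neg_apply, thetaTerm_neg hp z, mul_neg, baileyKernel_neg]

lemma thetaBaileySum_shift (hz : z ≠ 0) (hp : p ≠ 0) (q : ℂ) (d a b : ℤ) :
    thetaBaileySum q p z d a b = -z * thetaBaileySum q p (z * p) d (a - d) (b + d) := by
  rw [thetaBaileySum, ← (Equiv.addRight (1 : ℤ)).tsum_eq, thetaBaileySum, ← tsum_mul_left]
  refine tsum_congr fun k ↦ ?_
  rw [Equiv.coe_addRight, thetaTerm_succ hz hp, mul_add, mul_one, baileyKernel_add,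
    ← thetaTerm_mul_zpow]
  ring

lemma thetaBaileySum_zero_zero {d : ℤ} (hd : d ≠ 0) (q p z : ℂ) :
    thetaBaileySum q p z d 0 0 = 1 := by
  rw [thetaBaileySum, tsum_eq_single 0]
  · simp [baileyKernel]
  · intro k hk
    rcases lt_or_gt_of_ne (mul_ne_zero hd hk) with h | h
    · rw [← neg_neg (d * k), baileyKernel_neg, baileyKernel_of_lt q (by lia), mul_zero]
    · rw [baileyKernel_of_lt q h, mul_zero]

lemma thetaBaileySum_sub_one_right (hz : z ≠ 0) (hp : p ≠ 0) (hp1 : ‖p‖ < 1) (hq : q ≠ 0)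
    (hq1 : ‖q‖ < 1) (d a b : ℤ) :
    thetaBaileySum q p z d a (b - 1) =
      thetaBaileySum q p z d a b - q ^ b * thetaBaileySum q p (z * q ^ d) d a b := by
  have hsum : ∀ w ≠ 0, Summable fun k ↦ thetaTerm w p k * baileyKernel q a b (d * k) :=
    fun w hw ↦ summable_mul_baileyKernel (summable_thetaTerm hw hp hp1) hq1 _ _ _
  rw [thetaBaileySum, thetaBaileySum, thetaBaileySum, ← tsum_mul_left,
    ← (hsum z hz).tsum_sub ((hsum _ (mul_ne_zero hz (zpow_ne_zero d hq))).mul_left _)]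
  refine tsum_congr fun k ↦ ?_
  rw [baileyKernel_sub_one hq1, ← thetaTerm_mul_zpow, ← zpow_mul, zpow_add₀ hq]
  ring

lemma thetaBaileySum_sub_one_left (hz : z ≠ 0) (hp : p ≠ 0) (hp1 : ‖p‖ < 1) (hq : q ≠ 0)
    (hq1 : ‖q‖ < 1) (d a b : ℤ) :
    thetaBaileySum q p z d (a - 1) b =
      thetaBaileySum q p z d a b - q ^ a * thetaBaileySum q p (z / q ^ d) d a b := by
  rw [thetaBaileySum_reflect hp,
    thetaBaileySum_sub_one_right (div_ne_zero hp hz) hp hp1 hq hq1,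
    ← thetaBaileySum_reflect hp, thetaBaileySum_reflect hp _ (z / _),
    div_div_eq_mul_div, mul_div_right_comm]

lemma thetaBaileySum_contiguous_right (hz : z ≠ 0) (hp : p ≠ 0) (hp1 : ‖p‖ < 1) (hq : q ≠ 0)
    (hq1 : ‖q‖ < 1) (d a b : ℤ) :
    (1 - q ^ (a + b)) * thetaBaileySum q p z d a b =
      thetaBaileySum q p z d a (b - 1) +
        q ^ b * thetaBaileySum q p (z * q ^ d) d (a - 1) b := by
  have hqd := zpow_ne_zero d hq
  rw [thetaBaileySum_sub_one_right hz hp hp1 hq hq1,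
    thetaBaileySum_sub_one_left (mul_ne_zero hz hqd) hp hp1 hq hq1, mul_div_cancel_right₀ z hqd,
    zpow_add₀ hq]
  ring

lemma thetaBaileySum_contiguous_left (hz : z ≠ 0) (hp : p ≠ 0) (hp1 : ‖p‖ < 1) (hq : q ≠ 0)
    (hq1 : ‖q‖ < 1) (d a b : ℤ) :
    (1 - q ^ (a + b)) * thetaBaileySum q p z d a b =
      thetaBaileySum q p z d (a - 1) b +
        q ^ a * thetaBaileySum q p (z / q ^ d) d a (b - 1) := by
  have hqd := zpow_ne_zero d hq
  rw [thetaBaileySum_sub_one_left hz hp hp1 hq hq1,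
    thetaBaileySum_sub_one_right (div_ne_zero hz hqd) hp hp1 hq hq1, div_mul_cancel₀ z hqd,
    zpow_add₀ hq]
  ring

end ThetaBaileySum

section JacobiTripleProduct

variable {q z : ℂ}

lemma one_sub_zpow_mul_thetaBaileySum_self (hz : z ≠ 0) (hq : q ≠ 0) (hq1 : ‖q‖ < 1) (a b : ℤ) :
    (1 - q ^ (a + b)) * thetaBaileySum q q z 1 a b =
      (1 - q ^ b / z) * thetaBaileySum q q z 1 a (b - 1) := by
  have hshift := thetaBaileySum_shift hz hq q 1 a (b - 1)
  rw [sub_add_cancel] at hshift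
  rw [thetaBaileySum_contiguous_right hz hq hq1 hq hq1, zpow_one]
  field_simp
  linear_combination q ^ b * hshift

theorem qPoch_mul_thetaBaileySum_self (hz : z ≠ 0) (hq : q ≠ 0) (hq1 : ‖q‖ < 1) (n : ℕ) :
    qPoch q q (2 * n) * thetaBaileySum q q z 1 n n = qPoch z q n * qPoch (q / z) q n := by
  induction n with
  | zero => simp [thetaBaileySum_zero_zero one_ne_zero]
  | succ n ih =>
    have hright := one_sub_zpow_mul_thetaBaileySum_self hz hq hq1 (n + 1) (n + 1)
    have hleft := one_sub_zpow_mul_thetaBaileySum_self (div_ne_zero hq hz) hq hq1 n (n + 1)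
    rw [add_sub_cancel_right, thetaBaileySum_reflect hq q z 1 (n + 1) n] at hright
    rw [add_sub_cancel_right, ← thetaBaileySum_reflect hq q z 1 n n] at hleft
    have hleft_factor : q ^ ((n : ℤ) + 1) / (q / z) = z * q ^ n := by
      rw [zpow_add_one₀ hq, zpow_natCast]
      field_simp
    have hright_factor : q ^ ((n : ℤ) + 1) / z = q / z * q ^ n := by
      rw [zpow_add_one₀ hq, zpow_natCast]
      ring
    rw [hleft_factor, show (n : ℤ) + (n + 1) = (2 * n + 1 : ℕ) by lia, zpow_natCast] at hleft
    rw [hright_factor, show (n : ℤ) + 1 + (n + 1) = (2 * n + 2 : ℕ) by lia, zpow_natCast] at hright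
    rw [Nat.mul_succ, qPoch_succ z, qPoch_succ (q / z), qPoch_succ q q (2 * n + 1),
      qPoch_succ q q (2 * n), Nat.cast_succ]
    linear_combination qPoch q q (2 * n) * (1 - q ^ (2 * n + 1)) * hright +
      qPoch q q (2 * n) * (1 - q / z * q ^ n) * hleft +
      (1 - q / z * q ^ n) * (1 - z * q ^ n) * ih

theorem qTheta_eq_prod (hz : z ≠ 0) (hq : q ≠ 0) (hq1 : ‖q‖ < 1) :
    qTheta z q = qPochInf z q * qPochInf (q / z) q * qPochInf q q := by
  have hne := qPochInf_ne_zero_of_norm_lt_one hq1 hq1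
  have hlhs := ((tendsto_qPoch hq1 q).comp (tendsto_id.const_mul_atTop' two_pos)).mul
    ((tendsto_tsum_mul_baileyKernel (summable_thetaTerm hz hq hq1) hq1 (1 * ·)).comp
      tendsto_natCast_atTop_atTop)
  have hrhs := (tendsto_qPoch hq1 z).mul (tendsto_qPoch hq1 (q / z))
  have hlim := tendsto_nhds_unique
    (hlhs.congr fun n ↦ qPoch_mul_thetaBaileySum_self hz hq hq1 n) hrhs
  rw [← hlim, qTheta]
  field_simp

end JacobiTripleProduct

section BaileyPairs

variable {q : ℂ}

lemma one_sub_zpow_mul_thetaBaileySum_one (hq : q ≠ 0) (hq1 : ‖q‖ < 1) (a b : ℤ) :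
    (1 - q ^ (a + b)) * thetaBaileySum q (q ^ 2) 1 2 a b =
      thetaBaileySum q (q ^ 2) 1 2 a (b - 1) + q ^ b * thetaBaileySum q (q ^ 2) 1 2 b (a - 1) := by
  have hq2 := pow_ne_zero 2 hq
  rw [thetaBaileySum_contiguous_right one_ne_zero hq2 (norm_pow_lt_one hq1 two_ne_zero) hq hq1,
    one_mul, zpow_ofNat, thetaBaileySum_reflect hq2 q (q ^ 2), div_self hq2]

lemma thetaBaileySum_one_succ_pred (hq : q ≠ 0) (n : ℤ) :
    thetaBaileySum q (q ^ 2) 1 2 (n + 1) (n - 1) = 0 := by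
  have hq2 := pow_ne_zero 2 hq
  have hanti := thetaBaileySum_shift one_ne_zero hq2 q 2 (n + 1) (n - 1)
  rw [one_mul, thetaBaileySum_reflect hq2 q (q ^ 2), div_self hq2,
    show n - 1 + 2 = n + 1 by ring, show n + 1 - 2 = n - 1 by ring] at hanti
  linear_combination hanti / 2

lemma one_sub_mul_thetaBaileySum_one_succ_right (hq : q ≠ 0) (hq1 : ‖q‖ < 1) (n : ℕ) :
    (1 - q ^ (2 * n + 1)) * thetaBaileySum q (q ^ 2) 1 2 n (n + 1) =
      thetaBaileySum q (q ^ 2) 1 2 n n := by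
  have h := one_sub_zpow_mul_thetaBaileySum_one hq hq1 n (n + 1)
  rwa [add_sub_cancel_right, thetaBaileySum_one_succ_pred hq, mul_zero, add_zero,
    show (n : ℤ) + (n + 1) = (2 * n + 1 : ℕ) by lia, zpow_natCast] at h

lemma one_sub_mul_thetaBaileySum_one_succ_succ (hq : q ≠ 0) (hq1 : ‖q‖ < 1) (n : ℕ) :
    (1 - q ^ (2 * n + 1)) * (1 - q ^ (2 * n + 2)) * thetaBaileySum q (q ^ 2) 1 2 (n + 1) (n + 1) =
      (1 + q ^ (n + 1)) * (q ^ n * thetaBaileySum q (q ^ 2) 1 2 n n) := by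
  have hleft := one_sub_zpow_mul_thetaBaileySum_one hq hq1 (n + 1) n
  have hdiag := one_sub_zpow_mul_thetaBaileySum_one hq hq1 (n + 1) (n + 1)
  rw [add_sub_cancel_right, thetaBaileySum_one_succ_pred hq, zero_add,
    show (n : ℤ) + 1 + n = (2 * n + 1 : ℕ) by lia, zpow_natCast, zpow_natCast] at hleft
  rw [add_sub_cancel_right, show (n : ℤ) + 1 + (n + 1) = (2 * n + 2 : ℕ) by lia,
    show (n : ℤ) + 1 = (n + 1 : ℕ) by lia, zpow_natCast, zpow_natCast, Nat.cast_succ] at hdiag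
  linear_combination (1 - q ^ (2 * n + 1)) * hdiag + (1 + q ^ (n + 1)) * hleft

theorem qPoch_mul_thetaBaileySum_one (hq : q ≠ 0) (hq1 : ‖q‖ < 1) (n : ℕ) :
    qPoch q q (2 * n) * thetaBaileySum q (q ^ 2) 1 2 n n = q ^ n.choose 2 * qPoch (-q) q n := by
  induction n with
  | zero => simp [thetaBaileySum_zero_zero two_ne_zero]
  | succ n ih =>
    rw [Nat.mul_succ, qPoch_succ q q (2 * n + 1), qPoch_succ q q (2 * n), qPoch_succ,
      Nat.choose_succ_succ', Nat.choose_one_right, pow_add, Nat.cast_succ]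
    linear_combination qPoch q q (2 * n) * one_sub_mul_thetaBaileySum_one_succ_succ hq hq1 n +
      q ^ n * (1 + q ^ (n + 1)) * ih

theorem qPoch_mul_thetaBaileySum_one_succ (hq : q ≠ 0) (hq1 : ‖q‖ < 1) (n : ℕ) :
    qPoch q q (2 * n + 1) * thetaBaileySum q (q ^ 2) 1 2 n (n + 1) =
      q ^ n.choose 2 * qPoch (-q) q n := by
  rw [qPoch_succ, ← qPoch_mul_thetaBaileySum_one hq hq1]
  linear_combination qPoch q q (2 * n) * one_sub_mul_thetaBaileySum_one_succ_right hq hq1 n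

local notation "V" => thetaBaileySum q (q ^ 6) (-q) 3

local notation "W" => thetaBaileySum q (q ^ 6) (-q ^ 4) 3

lemma thetaBaileySum_neg_div_eq (hq : q ≠ 0) (a b : ℤ) :
    thetaBaileySum q (q ^ 6) (-q / q ^ (3 : ℤ)) 3 a b = W (a - 3) (b + 3) / q ^ 2 := by
  rw [thetaBaileySum_shift (div_ne_zero (neg_ne_zero.mpr hq) (zpow_ne_zero 3 hq))
    (pow_ne_zero 6 hq), zpow_ofNat]
  have hz : -q / q ^ 3 * q ^ 6 = -q ^ 4 := by field_simp
  rw [hz]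
  field_simp

lemma thetaBaileySum_neg_sub_one_right (hq : q ≠ 0) (hq1 : ‖q‖ < 1) (a b : ℤ) :
    V a (b - 1) = V a b - q ^ b * W a b := by
  have hz : -q * q ^ (3 : ℤ) = -q ^ 4 := by rw [zpow_ofNat]; ring
  rw [thetaBaileySum_sub_one_right (neg_ne_zero.mpr hq) (pow_ne_zero 6 hq)
    (norm_pow_lt_one hq1 (by lia)) hq hq1, hz]

lemma thetaBaileySum_neg_sub_one_left (hq : q ≠ 0) (hq1 : ‖q‖ < 1) (a b : ℤ) :
    V (a - 1) b = V a b - q ^ (a - 2) * W (a - 3) (b + 3) := by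
  rw [thetaBaileySum_sub_one_left (neg_ne_zero.mpr hq) (pow_ne_zero 6 hq)
    (norm_pow_lt_one hq1 (by lia)) hq hq1, thetaBaileySum_neg_div_eq hq, zpow_sub₀ hq, zpow_ofNat]
  ring

lemma thetaBaileySum_neg_pow_four_sub_one_left (hq : q ≠ 0) (hq1 : ‖q‖ < 1) (a b : ℤ) :
    W (a - 1) b = W a b - q ^ a * V a b := by
  have hz : -q ^ 4 / q ^ (3 : ℤ) = -q := by
    rw [zpow_ofNat]
    field_simp
  rw [thetaBaileySum_sub_one_left (neg_ne_zero.mpr (pow_ne_zero 4 hq)) (pow_ne_zero 6 hq)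
    (norm_pow_lt_one hq1 (by lia)) hq hq1, hz]

lemma thetaBaileySum_neg_pow_four_sub_one_right (hq : q ≠ 0) (hq1 : ‖q‖ < 1) (a b : ℤ) :
    W a (b - 1) = W a b - q ^ (b - 1) * V (a + 3) (b - 3) := by
  have hz : -q ^ 4 * q ^ (3 : ℤ) = -q * q ^ 6 := by
    rw [zpow_ofNat]
    ring
  have hshift := thetaBaileySum_shift (neg_ne_zero.mpr hq) (pow_ne_zero 6 hq) q 3 (a + 3) (b - 3)
  rw [add_sub_cancel_right, sub_add_cancel] at hshift
  rw [thetaBaileySum_sub_one_right (neg_ne_zero.mpr (pow_ne_zero 4 hq)) (pow_ne_zero 6 hq)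
    (norm_pow_lt_one hq1 (by lia)) hq hq1, hz, hshift, zpow_sub_one₀ hq]
  field_simp

lemma one_sub_zpow_mul_thetaBaileySum_neg_left (hq : q ≠ 0) (hq1 : ‖q‖ < 1) (a b : ℤ) :
    (1 - q ^ (a + b)) * V a b = V (a - 1) b + q ^ (a - 2) * W (a - 3) (b + 2) := by
  rw [thetaBaileySum_contiguous_left (neg_ne_zero.mpr hq) (pow_ne_zero 6 hq)
    (norm_pow_lt_one hq1 (by lia)) hq hq1, thetaBaileySum_neg_div_eq hq, zpow_sub₀ hq, zpow_ofNat,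
    show b - 1 + 3 = b + 2 by ring]
  ring

lemma one_sub_zpow_mul_thetaBaileySum_neg_right (hq : q ≠ 0) (hq1 : ‖q‖ < 1) (a b : ℤ) :
    (1 - q ^ (a + b)) * V a b = V a (b - 1) + q ^ b * W (a - 1) b := by
  have hz : -q * q ^ (3 : ℤ) = -q ^ 4 := by rw [zpow_ofNat]; ring
  rw [thetaBaileySum_contiguous_right (neg_ne_zero.mpr hq) (pow_ne_zero 6 hq)
    (norm_pow_lt_one hq1 (by lia)) hq hq1, hz]

lemma one_sub_mul_thetaBaileySum_neg_sub (hq : q ≠ 0) (hq1 : ‖q‖ < 1) (n : ℤ) :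
    (1 - q ^ (2 * n + 1)) * (V (n + 1) n - V (n + 2) (n - 1)) =
      q ^ n * q ^ n * (V n n - V (n + 2) (n - 2)) := by
  have h₁ := one_sub_zpow_mul_thetaBaileySum_neg_right hq hq1 (n + 1) n
  have h₂ := one_sub_zpow_mul_thetaBaileySum_neg_left hq hq1 (n + 2) (n - 1)
  have h₃ := thetaBaileySum_neg_pow_four_sub_one_right hq hq1 n (n + 1)
  have h₄ := thetaBaileySum_neg_pow_four_sub_one_left hq hq1 n (n + 1)
  have h₅ := thetaBaileySum_neg_sub_one_right hq hq1 n (n + 1)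
  have h₆ := thetaBaileySum_neg_sub_one_left hq hq1 (n + 3) (n - 2)
  rw [add_sub_cancel_right, show n + 1 + n = 2 * n + 1 by ring] at h₁
  rw [add_sub_cancel_right, show n + 2 + (n - 1) = 2 * n + 1 by ring,
    show n + 2 - 1 = n + 1 by ring, show n + 2 - 3 = n - 1 by ring,
    show n - 1 + 2 = n + 1 by ring] at h₂
  rw [add_sub_cancel_right, show n + 1 - 3 = n - 2 by ring] at h₃
  rw [add_sub_cancel_right] at h₅
  rw [add_sub_cancel_right, show n + 3 - 1 = n + 2 by ring, show n + 3 - 2 = n + 1 by ring,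
    show n - 2 + 3 = n + 1 by ring] at h₆
  linear_combination h₁ - h₂ + q ^ n * (h₃ - h₄) - q ^ n * q ^ n * (h₅ - h₆)

lemma one_sub_mul_thetaBaileySum_neg_sub_succ (hq : q ≠ 0) (hq1 : ‖q‖ < 1) (n : ℤ) :
    (1 - q ^ (2 * n + 2)) * (V (n + 1) (n + 1) - V (n + 1 + 2) (n + 1 - 2)) =
      V (n + 1) n - V (n + 2) (n - 1) := by
  have h₁ := one_sub_zpow_mul_thetaBaileySum_neg_right hq hq1 (n + 1) (n + 1)
  have h₂ := one_sub_zpow_mul_thetaBaileySum_neg_left hq hq1 (n + 1 + 2) (n + 1 - 2)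
  rw [add_sub_cancel_right, show n + 1 + (n + 1) = 2 * n + 2 by ring] at h₁
  rw [add_sub_cancel_right, show n + 1 + 2 + (n + 1 - 2) = 2 * n + 2 by ring,
    show n + 1 + 2 - 1 = n + 2 by ring, show n + 1 + 2 - 3 = n by ring,
    sub_add_cancel] at h₂
  rw [show n + 1 - 2 = n - 1 by ring] at h₂ ⊢
  linear_combination h₁ - h₂

lemma thetaBaileySum_three_two_neg_two (q p z : ℂ) : thetaBaileySum q p z 3 2 (-2) = 0 := by
  rw [thetaBaileySum, ← tsum_zero]
  refine tsum_congr fun k ↦ ?_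
  rcases lt_or_gt_of_ne (show 3 * k ≠ 2 by lia) with h | h
  · rw [← neg_neg (3 * k), baileyKernel_neg, baileyKernel_of_lt q (by lia), mul_zero]
  · rw [baileyKernel_of_lt q h, mul_zero]

theorem qPoch_mul_thetaBaileySum_neg_sub (hq : q ≠ 0) (hq1 : ‖q‖ < 1) (n : ℕ) :
    qPoch q q (2 * n) * (V n n - V (n + 2) (n - 2)) = (q ^ n.choose 2) ^ 2 := by
  induction n with
  | zero => simp [thetaBaileySum_zero_zero three_ne_zero, thetaBaileySum_three_two_neg_two]
  | succ n ih =>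
    have h₁ := one_sub_mul_thetaBaileySum_neg_sub_succ hq hq1 n
    have h₂ := one_sub_mul_thetaBaileySum_neg_sub hq hq1 n
    rw [show 2 * (n : ℤ) + 2 = (2 * n + 2 : ℕ) by lia, zpow_natCast] at h₁
    rw [show 2 * (n : ℤ) + 1 = (2 * n + 1 : ℕ) by lia, zpow_natCast, zpow_natCast] at h₂
    rw [Nat.mul_succ, qPoch_succ q q (2 * n + 1), qPoch_succ q q (2 * n),
      Nat.choose_succ_succ', Nat.choose_one_right, pow_add, Nat.cast_succ]
    linear_combination qPoch q q (2 * n) * ((1 - q ^ (2 * n + 1)) * h₁ + h₂) + (q ^ n) ^ 2 * ih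

end BaileyPairs

section BaileyTransform

variable {q : ℂ}

theorem hasSum_mul_tsum_mul_baileyKernel {w : ℕ → ℂ} {f : ℤ → ℂ} (hw : Summable w)
    (hf : Summable f) (hq1 : ‖q‖ < 1) (a b : ℕ → ℤ) (r : ℤ → ℤ) :
    HasSum (fun n ↦ w n * ∑' k, f k * baileyKernel q (a n) (b n) (r k))
      (∑' k, f k * ∑' n, w n * baileyKernel q (a n) (b n) (r k)) := by
  have hF : Summable fun i : ℕ × ℤ ↦
      w i.1 * f i.2 * baileyKernel q (a i.1) (b i.1) (r i.2) :=
    summable_mul_baileyKernel (summable_mul_of_summable_norm hw.norm hf.norm) hq1 _ _ _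
  have h := hF.hasSum.prod_fiberwise fun n ↦ (hF.prod_factor n).hasSum
  rw [hF.tsum_prod, ← Summable.tsum_comm (f := fun n k ↦
    w n * f k * baileyKernel q (a n) (b n) (r k)) hF] at h
  simp only [mul_assoc, tsum_mul_left] at h
  simpa only [mul_left_comm (w _), tsum_mul_left] using h

lemma baileyKernel_neg_sub (q : ℂ) (n e r : ℤ) :
    baileyKernel q n (n + e) (-e - r) = baileyKernel q n (n + e) r := by
  rw [← neg_add', add_comm e r, baileyKernel_neg, baileyKernel_add, add_sub_cancel_right]

lemma tsum_mul_baileyKernel_eq_of_natCast {w : ℕ → ℂ} {g : ℤ → ℂ} {e : ℕ} (he : e ≤ 1)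
    (hg : ∀ r, g (-e - r) = g r)
    (h : ∀ r : ℕ, ∑' n : ℕ, w n * baileyKernel q n (n + e) r = g r) (r : ℤ) :
    ∑' n : ℕ, w n * baileyKernel q n (n + e) r = g r := by
  rcases le_or_gt 0 r with hr | hr
  · lift r to ℕ using hr
    exact h r
  · obtain ⟨s, hs⟩ := Int.eq_ofNat_of_zero_le (show 0 ≤ -e - r by lia)
    simp only [← baileyKernel_neg_sub q _ e r]
    rw [hs, h, ← hs, hg]

/-- Dropping the vanishing terms `n < r` leaves a `q`-Gauss sum. -/
theorem tsum_cauchyCoeff_mul_baileyKernel (hq1 : ‖q‖ < 1) (b : ℂ) (e r : ℕ) :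
    ∑' n : ℕ, cauchyCoeff b (q ^ (e + 1)) q n * baileyKernel q n (n + e) r =
      cauchyCoeff b (q ^ (e + 1)) q r * (qPochInf (b * q ^ r) q / qPochInf q q) := by
  have hc : ∀ n, 1 - q * q ^ (2 * r + e) * q ^ n ≠ 0 := fun n ↦ by
    rw [mul_assoc, ← pow_add]
    exact one_sub_mul_pow_ne_zero hq1 hq1 _
  have hsum := summable_mul_baileyKernel (summable_cauchyCoeff hq1 b (q ^ (e + 1))) hq1
    (fun n ↦ n) (fun n ↦ n + e) (fun _ ↦ r)
  have hzero : ∀ n ∈ Finset.range r,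
      cauchyCoeff b (q ^ (e + 1)) q n * baileyKernel q n (n + e) r = 0 := fun n hn ↦ by
    rw [baileyKernel_of_lt q (Nat.cast_lt.mpr (Finset.mem_range.mp hn)), mul_zero]
  rw [← hsum.sum_add_tsum_nat_add r, Finset.sum_eq_zero hzero, zero_add,
    qPochInf_eq_qPoch_mul hq1 q (2 * r + e), mul_comm (qPoch _ _ _), ← div_div,
    ← tsum_cauchyCoeff_div hq1 hc, ← tsum_div_const, ← tsum_mul_left]
  refine tsum_congr fun m ↦ ?_
  rw [add_comm m r, cauchyCoeff_add, baileyKernel, Nat.cast_add, add_sub_cancel_left,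
    show (r : ℤ) + m + e + r = (2 * r + e + m : ℕ) by lia, qPochInv_natCast, qPochInv_natCast,
    qPoch_add, ← pow_add, show q * q ^ (2 * r + e) = q ^ (e + 1 + 2 * r) by ring]
  field_simp

end BaileyTransform

section Slater

variable {q p : ℂ}

lemma cauchyCoeff_zero_left (q : ℂ) (n : ℕ) : cauchyCoeff 0 (q ^ 2) q n = q ^ (n ^ 2 + n) := by
  induction n with
  | zero => simp
  | succ n ih =>
    rw [cauchyCoeff_succ, ih]
    ring

lemma cauchyCoeff_neg_sq_sq (p : ℂ) (n : ℕ) :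
    cauchyCoeff (-p) (p ^ 2) (p ^ 2) n = p ^ (n ^ 2) * qPoch (-p) (p ^ 2) n := by
  induction n with
  | zero => simp
  | succ n ih =>
    rw [cauchyCoeff_succ, ih, qPoch_succ]
    ring

lemma tsum_pow_sq_add_mul_baileyKernel (hq1 : ‖q‖ < 1) (r : ℤ) :
    ∑' n : ℕ, q ^ (n ^ 2 + n) * baileyKernel q n (n + 1) r =
      q ^ (r ^ 2 + r) / qPochInf q q := by
  refine tsum_mul_baileyKernel_eq_of_natCast (e := 1)
    (g := fun r ↦ q ^ (r ^ 2 + r) / qPochInf q q) le_rfl (fun r ↦ ?_) (fun r ↦ ?_) r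
  · rw [Nat.cast_one]
    ring_nf
  · have h := tsum_cauchyCoeff_mul_baileyKernel hq1 0 1 r
    simp only [one_add_one_eq_two, cauchyCoeff_zero_left, zero_mul, qPochInf_zero_left] at h
    rw [h, mul_one_div]
    norm_cast

lemma tsum_pow_sq_mul_qPoch_mul_baileyKernel (hp1 : ‖p‖ < 1) (r : ℤ) :
    ∑' n : ℕ, p ^ (n ^ 2) * qPoch (-p) (p ^ 2) n * baileyKernel (p ^ 2) n n r =
      p ^ (r ^ 2) * (qPochInf (-p) (p ^ 2) / qPochInf (p ^ 2) (p ^ 2)) := by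
  have hp21 := norm_pow_lt_one hp1 two_ne_zero
  have h := tsum_mul_baileyKernel_eq_of_natCast (q := p ^ 2) (e := 0)
    (w := fun n ↦ p ^ (n ^ 2) * qPoch (-p) (p ^ 2) n)
    (g := fun r ↦ p ^ (r ^ 2) * (qPochInf (-p) (p ^ 2) / qPochInf (p ^ 2) (p ^ 2))) zero_le_one
    (fun r ↦ by simp) (fun r ↦ ?_) r
  · simpa only [Nat.cast_zero, add_zero] using h
  · have h := tsum_cauchyCoeff_mul_baileyKernel hp21 (-p) 0 r
    simp only [zero_add, pow_one, cauchyCoeff_neg_sq_sq] at h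
    rw [h, mul_div_assoc', mul_assoc, ← qPochInf_eq_qPoch_mul hp21, mul_div_assoc]
    norm_cast

/-- The Bailey pair with `α_{2k} = (-1)^k q^{k(k-1)}` relative to `a = q`. -/
theorem tsum_slater_odd (hq : q ≠ 0) (hq1 : ‖q‖ < 1) :
    ∑' n : ℕ, q ^ (n ^ 2 + n) * (q ^ n.choose 2 * qPoch (-q) q n / qPoch q q (2 * n + 1)) =
      qTheta (q ^ 6) (q ^ 10) / qPochInf q q := by
  have hq2 := norm_pow_lt_one hq1 two_ne_zero
  have hw : Summable fun n : ℕ ↦ q ^ (n ^ 2 + n) :=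
    (summable_cauchyCoeff hq1 0 (q ^ 2)).congr (cauchyCoeff_zero_left q)
  have hα := summable_thetaTerm one_ne_zero (pow_ne_zero 2 hq) hq2
  have h := (hasSum_mul_tsum_mul_baileyKernel hw hα hq1 (fun n ↦ n) (fun n ↦ n + 1)
    (fun k ↦ 2 * k)).tsum_eq
  simp only [tsum_pow_sq_add_mul_baileyKernel hq1] at h
  convert h using 1
  · refine tsum_congr fun n ↦ ?_
    rw [← qPoch_mul_thetaBaileySum_one_succ hq hq1,
      mul_div_cancel_left₀ _ (qPoch_ne_zero (one_sub_mul_pow_ne_zero hq1 hq1) _), thetaBaileySum]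
  · rw [qTheta, ← tsum_div_const]
    refine tsum_congr fun k ↦ ?_
    have hexp : q ^ ((2 * k) ^ 2 + 2 * k) = (q ^ 4) ^ (k * (k - 1)) * (q ^ 6) ^ k := by
      rw [← zpow_natCast, ← zpow_natCast, ← zpow_mul, ← zpow_mul, ← zpow_add₀ hq]
      congr 1
      push_cast
      ring
    rw [hexp, mul_div_assoc', ← mul_assoc, thetaTerm_mul_zpow_mul_sub_one, thetaTerm_mul_zpow,
      one_mul, ← pow_mul, ← pow_add]

lemma thetaTerm_mul_zpow_three_mul_sub_sq (hp : p ≠ 0) (s k : ℤ) :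
    thetaTerm (-p ^ 2) (p ^ 12) k * p ^ ((3 * k - s) ^ 2) =
      p ^ (s ^ 2) * thetaTerm (-p ^ (11 - 6 * s)) (p ^ 30) k := by
  have hexp : p ^ ((3 * k - s) ^ 2) =
      p ^ (s ^ 2) * ((p ^ 9) ^ (k * (k - 1)) * (p ^ (9 - 6 * s)) ^ k) := by
    rw [← zpow_natCast p 9, ← zpow_mul, ← zpow_mul, ← zpow_add₀ hp, ← zpow_add₀ hp]
    congr 1
    push_cast
    ring
  rw [hexp, mul_left_comm, ← mul_assoc (thetaTerm _ _ _), thetaTerm_mul_zpow_mul_sub_one,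
    thetaTerm_mul_zpow, ← pow_mul, ← pow_add, neg_mul, ← zpow_natCast p 2, ← zpow_add₀ hp,
    Nat.cast_ofNat, ← add_sub_assoc]
  rfl

lemma hasSum_mul_thetaBaileySum (hp : p ≠ 0) (hp1 : ‖p‖ < 1) (s : ℤ) :
    HasSum (fun n : ℕ ↦ p ^ (n ^ 2) * qPoch (-p) (p ^ 2) n *
        thetaBaileySum (p ^ 2) (p ^ 12) (-p ^ 2) 3 (n + s) (n - s))
      (p ^ (s ^ 2) * qTheta (-p ^ (11 - 6 * s)) (p ^ 30) *
        (qPochInf (-p) (p ^ 2) / qPochInf (p ^ 2) (p ^ 2))) := by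
  have hp21 := norm_pow_lt_one hp1 two_ne_zero
  have hw : Summable fun n : ℕ ↦ p ^ (n ^ 2) * qPoch (-p) (p ^ 2) n :=
    (summable_cauchyCoeff hp21 (-p) (p ^ 2)).congr (cauchyCoeff_neg_sq_sq p)
  have hα := summable_thetaTerm (neg_ne_zero.mpr (pow_ne_zero 2 hp)) (pow_ne_zero 12 hp)
    (norm_pow_lt_one hp1 (by norm_num))
  have h := hasSum_mul_tsum_mul_baileyKernel hw hα hp21 (fun n ↦ n) (fun n ↦ n)
    (fun k ↦ 3 * k - s)
  simp only [tsum_pow_sq_mul_qPoch_mul_baileyKernel hp1, ← mul_assoc (thetaTerm _ _ _),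
    thetaTerm_mul_zpow_three_mul_sub_sq hp, tsum_mul_left, tsum_mul_right] at h
  simpa only [baileyKernel_sub, thetaBaileySum, qTheta] using h

theorem tsum_slater_even (hp : p ≠ 0) (hp1 : ‖p‖ < 1) :
    ∑' n : ℕ, p ^ (n ^ 2) * qPoch (-p) (p ^ 2) n *
        (((p ^ 2) ^ n.choose 2) ^ 2 / qPoch (p ^ 2) (p ^ 2) (2 * n)) =
      qPochInf (-p) (p ^ 2) / qPochInf (p ^ 2) (p ^ 2) *
        (qTheta (-p ^ 19) (p ^ 30) - p ^ 3 * qTheta (-p ^ 29) (p ^ 30)) := by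
  have hp21 := norm_pow_lt_one hp1 two_ne_zero
  have hreflect : qTheta (-p ^ (11 : ℤ)) (p ^ 30) = qTheta (-p ^ 19) (p ^ 30) := by
    rw [← qTheta_div_left (pow_ne_zero 30 hp), zpow_ofNat]
    congr 1
    field_simp
  have hshift : p ^ (4 : ℤ) * qTheta (-p ^ (-1 : ℤ)) (p ^ 30) =
      p ^ 3 * qTheta (-p ^ 29) (p ^ 30) := by
    rw [qTheta_eq_neg_mul (neg_ne_zero.mpr (zpow_ne_zero _ hp)) (pow_ne_zero 30 hp), zpow_neg_one,
      show -p⁻¹ * p ^ 30 = -p ^ 29 by field_simp, zpow_ofNat]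
    field_simp
  have h := ((hasSum_mul_thetaBaileySum hp hp1 0).sub (hasSum_mul_thetaBaileySum hp hp1 2)).tsum_eq
  rw [show (11 - 6 * 0 : ℤ) = 11 by norm_num, show (11 - 6 * 2 : ℤ) = -1 by norm_num,
    show (2 : ℤ) ^ 2 = 4 by norm_num, hreflect, hshift, zero_pow two_ne_zero, zpow_zero, one_mul,
    ← sub_mul, mul_comm] at h
  rw [← h]
  refine tsum_congr fun n ↦ ?_
  rw [← qPoch_mul_thetaBaileySum_neg_sub (pow_ne_zero 2 hp) hp21,
    mul_div_cancel_left₀ _ (qPoch_ne_zero (one_sub_mul_pow_ne_zero hp21 hp21) _), mul_sub,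
    ← pow_mul, add_zero, sub_zero]

end Slater

section QuintupleProduct

variable {q z : ℂ}

lemma qTheta_one_left (hq : q ≠ 0) (hq1 : ‖q‖ < 1) : qTheta 1 q = 0 := by
  rw [qTheta_eq_prod one_ne_zero hq hq1, qPochInf_one_left hq1, zero_mul, zero_mul]

lemma qTheta_self_pow_three (hq : q ≠ 0) (hq1 : ‖q‖ < 1) : qTheta q (q ^ 3) = qPochInf q q := by
  rw [qTheta_eq_prod hq (pow_ne_zero 3 hq) (norm_pow_lt_one hq1 three_ne_zero),
    qPochInf_eq_prod_residues hq1 q three_ne_zero, Finset.prod_range_succ, Finset.prod_range_succ,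
    Finset.prod_range_one, show q ^ 3 / q = q * q ^ 1 by field_simp]
  ring_nf

lemma qTheta_sq_self_pow_three (hq : q ≠ 0) (hq1 : ‖q‖ < 1) :
    qTheta (q ^ 2) (q ^ 3) = qPochInf q q := by
  rw [← qTheta_self_pow_three hq hq1, ← qTheta_div_left (pow_ne_zero 3 hq)]
  congr 1
  field_simp

lemma thetaTerm_mul_thetaTerm (a b p q : ℂ) (r : ℤ) :
    thetaTerm a p r * thetaTerm b q r = thetaTerm (-(a * b)) (p * q) r := by
  rw [thetaTerm, thetaTerm, thetaTerm, mul_mul_mul_comm, ← mul_zpow, ← mul_zpow, neg_mul_neg,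
    neg_neg]

lemma thetaTerm_mul (hq : q ≠ 0) (z : ℂ) (d r : ℤ) :
    thetaTerm z q (d * r) = thetaTerm (-thetaTerm z q d) (q ^ (d ^ 2)) r := by
  have hexp : d * r * (d * r - 1) / 2 = d * (d - 1) / 2 * r + d ^ 2 * (r * (r - 1) / 2) := by
    have := two_mul_mul_sub_one_ediv_two
    refine mul_left_cancel₀ two_ne_zero ?_
    linear_combination this (d * r) - r * this d - d ^ 2 * this r
  rw [thetaTerm, thetaTerm, thetaTerm, neg_neg, hexp, zpow_add₀ hq, zpow_mul, zpow_mul, zpow_mul,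
    mul_zpow, mul_assoc]

lemma thetaTerm_sub_two_mul_mul (hz : z ≠ 0) (hq : q ≠ 0) (n m : ℤ) :
    thetaTerm z q (n - 2 * m) * thetaTerm (q * z ^ 2) (q ^ 2) m =
      thetaTerm z q n * thetaTerm (q ^ (4 - 2 * n)) (q ^ 6) m := by
  rw [sub_eq_neg_add, thetaTerm_add hz hq, thetaTerm_neg hq, thetaTerm_mul hq, mul_assoc,
    thetaTerm_mul_thetaTerm]
  congr 2
  · rw [thetaTerm_two, zpow_sub₀ hq, two_mul n, zpow_add₀ hq, zpow_ofNat]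
    field_simp
  · norm_cast
    ring

lemma thetaTerm_three_mul_add (hz : z ≠ 0) (hq : q ≠ 0) (k i : ℤ) :
    thetaTerm z q (3 * k + i) =
      thetaTerm z q i * thetaTerm (-(z ^ 3 * q ^ (i + 1))) (q ^ 3) k *
        thetaTerm (q ^ (4 - 2 * i)) (q ^ 6) (-k) := by
  rw [thetaTerm_add hz hq, thetaTerm_mul hq, thetaTerm_neg (pow_ne_zero 6 hq), mul_assoc,
    thetaTerm_mul_thetaTerm]
  congr 2
  · rw [thetaTerm_three, zpow_sub₀ hq, two_mul i, zpow_add_one₀ hq, zpow_add₀ hq, zpow_ofNat]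
    field_simp
  · norm_cast
    ring

lemma hasSum_thetaTerm_mul_qTheta (hz : z ≠ 0) (hq : q ≠ 0) (hq1 : ‖q‖ < 1) :
    HasSum (fun n : ℤ ↦ thetaTerm z q n * qTheta (q ^ (4 - 2 * n)) (q ^ 6))
      (qTheta z q * qTheta (q * z ^ 2) (q ^ 2)) := by
  have h₁ := summable_thetaTerm hz hq hq1
  have h₂ := summable_thetaTerm (mul_ne_zero hq (pow_ne_zero 2 hz)) (pow_ne_zero 2 hq)
    (norm_pow_lt_one hq1 two_ne_zero)
  let e : ℤ × ℤ ≃ ℤ × ℤ :=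
    { toFun := fun x ↦ (x.1 - 2 * x.2, x.2)
      invFun := fun x ↦ (x.1 + 2 * x.2, x.2)
      left_inv := fun x ↦ by simp
      right_inv := fun x ↦ by simp }
  have h := e.hasSum_iff.mpr (h₁.hasSum.mul h₂.hasSum
    (summable_mul_of_summable_norm h₁.norm h₂.norm))
  have hsum := h.prod_fiberwise fun n ↦ (h.summable.prod_factor n).hasSum
  simpa only [e, Function.comp_apply, Equiv.coe_fn_mk, thetaTerm_sub_two_mul_mul hz hq,
    tsum_mul_left, qTheta] using hsum

lemma thetaTerm_mul_qTheta_three_mul_add (hz : z ≠ 0) (hq : q ≠ 0) (k i : ℤ) :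
    thetaTerm z q (3 * k + i) * qTheta (q ^ (4 - 2 * (3 * k + i))) (q ^ 6) =
      thetaTerm z q i * qTheta (q ^ (4 - 2 * i)) (q ^ 6) *
        thetaTerm (-(z ^ 3 * q ^ (i + 1))) (q ^ 3) k := by
  have hexp : q ^ (4 - 2 * (3 * k + i)) = q ^ (4 - 2 * i) * (q ^ 6) ^ (-k) := by
    rw [← zpow_natCast, ← zpow_mul, ← zpow_add₀ hq]
    congr 1
    push_cast
    ring
  rw [qTheta_eq_thetaTerm_mul (zpow_ne_zero (4 - 2 * i) hq) (pow_ne_zero 6 hq) (-k), ← hexp,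
    thetaTerm_three_mul_add hz hq]
  ring

lemma sum_thetaTerm_mul_qTheta_three_mul_add (hz : z ≠ 0) (hq : q ≠ 0) (hq1 : ‖q‖ < 1) (k : ℤ) :
    ∑ i : Fin 3, thetaTerm z q (3 * k + (i : ℕ)) *
        qTheta (q ^ (4 - 2 * (3 * k + (i : ℕ)))) (q ^ 6) =
      qPochInf (q ^ 2) (q ^ 2) * (thetaTerm (-(z ^ 3 * q)) (q ^ 3) k -
        z * thetaTerm (-(z ^ 3 * q ^ 2)) (q ^ 3) k) := by
  have hq2 := pow_ne_zero 2 hq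
  have hq21 := norm_pow_lt_one hq1 two_ne_zero
  have htheta₄ : qTheta (q ^ 4) (q ^ 6) = qPochInf (q ^ 2) (q ^ 2) := by
    rw [← qTheta_sq_self_pow_three hq2 hq21, ← pow_mul, ← pow_mul]
  have htheta₂ : qTheta (q ^ 2) (q ^ 6) = qPochInf (q ^ 2) (q ^ 2) := by
    rw [← qTheta_self_pow_three hq2 hq21, ← pow_mul]
  have htheta₀ : qTheta 1 (q ^ 6) = 0 :=
    qTheta_one_left (pow_ne_zero 6 hq) (norm_pow_lt_one hq1 (by lia))
  simp only [thetaTerm_mul_qTheta_three_mul_add hz hq, Fin.sum_univ_three, Fin.val_zero,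
    Fin.val_one, Fin.val_two, Nat.cast_zero, Nat.cast_one, Nat.cast_ofNat, thetaTerm_zero,
    thetaTerm_one, mul_zero, mul_one, sub_zero, zero_add, Int.reduceMul, Int.reduceSub,
    Int.reduceAdd, zpow_ofNat, pow_zero, pow_one]
  rw [htheta₄, htheta₂, htheta₀]
  ring

/-- With `N = r + 2m` the product of the two theta series becomes a sum over `N` of theta functions
in base `q⁶`, which depend only on `N` modulo `3` and vanish for `N ≡ 2`. -/
theorem qTheta_mul_qTheta (hz : z ≠ 0) (hq : q ≠ 0) (hq1 : ‖q‖ < 1) :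
    qTheta z q * qTheta (q * z ^ 2) (q ^ 2) =
      qPochInf (q ^ 2) (q ^ 2) *
        (qTheta (-(z ^ 3 * q)) (q ^ 3) - z * qTheta (-(z ^ 3 * q ^ 2)) (q ^ 3)) := by
  have hsummable : ∀ i : ℕ, Summable (thetaTerm (-(z ^ 3 * q ^ i)) (q ^ 3)) := fun i ↦
    summable_thetaTerm (neg_ne_zero.mpr (mul_ne_zero (pow_ne_zero 3 hz) (pow_ne_zero i hq)))
      (pow_ne_zero 3 hq) (norm_pow_lt_one hq1 three_ne_zero)
  have h := (Int.divModEquiv 3).symm.hasSum_iff.mpr (hasSum_thetaTerm_mul_qTheta hz hq hq1)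
  have hfiber := (h.prod_fiberwise fun k ↦ hasSum_fintype _).tsum_eq
  simp only [Function.comp_apply, Int.divModEquiv_symm_apply, Nat.cast_ofNat, mul_comm _ (3 : ℤ),
    sum_thetaTerm_mul_qTheta_three_mul_add hz hq hq1] at hfiber
  have h₁ := hsummable 1
  rw [pow_one] at h₁
  rw [← hfiber, tsum_mul_left, h₁.tsum_sub ((hsummable 2).mul_left z), tsum_mul_left, qTheta,
    qTheta]

end QuintupleProduct

section QuadrupleSum

variable {q : ℂ}

/-- The exponent of `q` in the quadruple series. -/
def quadForm (i j k l : ℤ) : ℤ :=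
  4 * i ^ 2 + 4 * j ^ 2 + 4 * k ^ 2 + 5 * l ^ 2 - 4 * i * l - 4 * j * l + 4 * k * l - 4 * l

/-- The summand at `(i, j, k, l)` of the quadruple series `F(1, 1, 1, q⁻¹; q²)`, with `q` replaced
by `q⁴`. -/
noncomputable def quadTerm (q : ℂ) (i j k l : ℕ) : ℂ :=
  q ^ quadForm i j k l /
    (qPoch (q ^ 8) (q ^ 8) i * qPoch (q ^ 8) (q ^ 8) j * qPoch (q ^ 8) (q ^ 8) k *
      qPoch (q ^ 8) (q ^ 8) l)

/-- The sum of `quadTerm q i j k l` over `i`, `j` and `k`, in closed form. -/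
noncomputable def quadSlice (q : ℂ) (l : ℕ) : ℂ :=
  q ^ (5 * (l : ℤ) ^ 2 - 4 * l) / qPoch (q ^ 8) (q ^ 8) l *
    (qPochInf (-q ^ (4 - 4 * (l : ℤ))) (q ^ 8) ^ 2 * qPochInf (-q ^ (4 + 4 * (l : ℤ))) (q ^ 8))

lemma add_sub_four_le_quadForm (i j k l : ℕ) :
    (i + j + k + l : ℤ) - 4 ≤ quadForm i j k l := by
  have hsq : ∀ n : ℤ, 0 ≤ n ^ 2 - n := fun n ↦ sub_nonneg.mpr (Int.le_self_sq n)
  have hdiff : quadForm i j k l - (i + j + k + l - 4) =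
      ((2 * i - l) ^ 2 - (2 * i - l)) + ((2 * j - l) ^ 2 - (2 * j - l)) +
        ((2 * k + l) ^ 2 - (2 * k + l)) + 2 * ((2 - l) ^ 2 - (2 - l)) + (i + j + k : ℕ) := by
    rw [quadForm]
    push_cast
    ring
  have := hsq (2 * i - l)
  have := hsq (2 * j - l)
  have := hsq (2 * k + l)
  have := hsq (2 - l)
  lia

lemma summable_quadTerm (hq : q ≠ 0) (hq1 : ‖q‖ < 1) :
    Summable fun x : ℕ × ℕ × ℕ × ℕ ↦ quadTerm q x.1 x.2.1 x.2.2.1 x.2.2.2 := by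
  have hq81 := norm_pow_lt_one hq1 (show 8 ≠ 0 by lia)
  obtain ⟨C, hC⟩ := exists_norm_inv_qPoch_le hq81 (one_sub_mul_pow_ne_zero hq81 hq81)
  have hC_nonneg : 0 ≤ C := (norm_nonneg _).trans (hC 0)
  have hgeom := summable_geometric_of_lt_one (norm_nonneg q) hq1
  have hpow_nonneg : ∀ n, 0 ≤ ‖q‖ ^ n := fun n ↦ pow_nonneg (norm_nonneg q) n
  have hgeom₂ := hgeom.mul_of_nonneg hgeom hpow_nonneg hpow_nonneg
  have hgeom₃ := hgeom.mul_of_nonneg hgeom₂ hpow_nonneg fun x ↦ by positivity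
  have hgeom₄ := hgeom.mul_of_nonneg hgeom₃ hpow_nonneg fun x ↦ by positivity
  refine Summable.of_norm_bounded (hgeom₄.mul_left (C ^ 4 * ‖q‖ ^ (-4 : ℤ))) ?_
  rintro ⟨i, j, k, l⟩
  have hnorm : 0 < ‖q‖ := norm_pos_iff.mpr hq
  have hexp : ‖q‖ ^ quadForm i j k l ≤
      ‖q‖ ^ (-4 : ℤ) * (‖q‖ ^ i * (‖q‖ ^ j * (‖q‖ ^ k * ‖q‖ ^ l))) := by
    have hle := add_sub_four_le_quadForm i j k l
    refine (zpow_le_zpow_right_of_le_one₀ hnorm hq1.le hle).trans_eq ?_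
    simp only [← zpow_natCast, ← zpow_add₀ hnorm.ne']
    congr 1
    ring
  simp only [quadTerm, div_eq_mul_inv, mul_inv, norm_mul, norm_zpow]
  calc _ ≤ (‖q‖ ^ (-4 : ℤ) * (‖q‖ ^ i * (‖q‖ ^ j * (‖q‖ ^ k * ‖q‖ ^ l)))) * (C * C * C * C) := by
        gcongr <;> apply hC
    _ = _ := by ring

lemma quadTerm_eq_mul_eulerTerm (hq : q ≠ 0) (i j k l : ℕ) :
    quadTerm q i j k l = q ^ (5 * (l : ℤ) ^ 2 - 4 * l) / qPoch (q ^ 8) (q ^ 8) l *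
      (eulerTerm (q ^ 4) (q ^ (-(4 * l) : ℤ)) i * (eulerTerm (q ^ 4) (q ^ (-(4 * l) : ℤ)) j *
        eulerTerm (q ^ 4) (q ^ (4 * l : ℤ)) k)) := by
  have hexp : q ^ quadForm i j k l =
      q ^ (5 * (l : ℤ) ^ 2 - 4 * l) * ((q ^ 4) ^ (i ^ 2) * (q ^ (-(4 * l) : ℤ)) ^ i) *
        ((q ^ 4) ^ (j ^ 2) * (q ^ (-(4 * l) : ℤ)) ^ j) *
        ((q ^ 4) ^ (k ^ 2) * (q ^ (4 * l : ℤ)) ^ k) := by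
    simp only [← zpow_natCast, ← zpow_mul, ← zpow_add₀ hq]
    congr 1
    rw [quadForm]
    push_cast
    ring
  simp only [quadTerm, eulerTerm, hexp, ← pow_mul, Nat.reduceMul]
  ring

lemma hasSum_eulerTerm_zpow (hq : q ≠ 0) (hq1 : ‖q‖ < 1) (s : ℤ) :
    HasSum (eulerTerm (q ^ 4) (q ^ s)) (qPochInf (-q ^ (4 + s)) (q ^ 8)) := by
  rw [zpow_add₀ hq, zpow_ofNat]
  simpa only [← pow_mul] using hasSum_eulerTerm (norm_pow_lt_one hq1 four_ne_zero) (q ^ s)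

lemma hasSum_prod_mul {ι κ : Type*} {f : ι → ℂ} {g : κ → ℂ} {a b : ℂ} (hf : HasSum f a)
    (hg : HasSum g b) : HasSum (fun x : ι × κ ↦ f x.1 * g x.2) (a * b) :=
  hf.mul hg (summable_mul_of_summable_norm hf.summable.norm hg.summable.norm)

lemma hasSum_quadTerm_quadSlice (hq : q ≠ 0) (hq1 : ‖q‖ < 1) (l : ℕ) :
    HasSum (fun x : ℕ × ℕ × ℕ ↦ quadTerm q x.1 x.2.1 x.2.2 l) (quadSlice q l) := by
  have hneg := hasSum_eulerTerm_zpow hq hq1 (-(4 * l))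
  have hpos := hasSum_eulerTerm_zpow hq hq1 (4 * l)
  have h := (hasSum_prod_mul hneg (hasSum_prod_mul hneg hpos)).mul_left
    (q ^ (5 * (l : ℤ) ^ 2 - 4 * l) / qPoch (q ^ 8) (q ^ 8) l)
  simp only [quadSlice, quadTerm_eq_mul_eulerTerm hq, sub_eq_add_neg (4 : ℤ), sq, mul_assoc]
  simpa only [mul_assoc, sq] using h

lemma hasSum_quadSlice (hq : q ≠ 0) (hq1 : ‖q‖ < 1) :
    HasSum (quadSlice q)
      (∑' x : ℕ × ℕ × ℕ × ℕ, quadTerm q x.1 x.2.1 x.2.2.1 x.2.2.2) := by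
  let e : ℕ × ℕ × ℕ × ℕ ≃ ℕ × ℕ × ℕ × ℕ :=
    { toFun := fun x ↦ (x.2.1, x.2.2.1, x.2.2.2, x.1)
      invFun := fun x ↦ (x.2.2.2, x.1, x.2.1, x.2.2.1)
      left_inv := fun _ ↦ rfl
      right_inv := fun _ ↦ rfl }
  exact (e.hasSum_iff.mpr (summable_quadTerm hq hq1).hasSum).prod_fiberwise
    fun l ↦ hasSum_quadTerm_quadSlice hq hq1 l

lemma quadSlice_eq_qPoch_mul {z : ℂ} (hz : z ≠ 0) (hq : q ≠ 0) (hq1 : ‖q‖ < 1) {l m : ℕ}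
    (h : q ^ (4 - 4 * (l : ℤ)) = -(z / (q ^ 8) ^ m)) :
    quadSlice q l = q ^ (5 * (l : ℤ) ^ 2 - 4 * l) / qPoch (q ^ 8) (q ^ 8) l *
      (z ^ (2 * m) / (q ^ 8) ^ (m * (m + 1)) * qPoch (q ^ 8 / z) (q ^ 8) m *
        (qPochInf z (q ^ 8) ^ 2 * qPochInf (q ^ 8 / z) (q ^ 8))) := by
  have h' : -q ^ (4 + 4 * (l : ℤ)) = q ^ 8 / z * (q ^ 8) ^ m := by
    have hmul : q ^ (4 + 4 * (l : ℤ)) * q ^ (4 - 4 * (l : ℤ)) = q ^ 8 := by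
      rw [← zpow_add₀ hq, ← zpow_ofNat]
      congr 1
      ring
    rw [h, mul_neg, mul_div_assoc', neg_eq_iff_eq_neg,
      div_eq_iff (pow_ne_zero m (pow_ne_zero 8 hq))] at hmul
    rw [div_mul_eq_mul_div, eq_div_iff hz]
    linear_combination -hmul
  rw [quadSlice, h, h', neg_neg,
    qPochInf_div_pow_sq_mul hz (pow_ne_zero 8 hq) (norm_pow_lt_one hq1 (by lia))]

lemma two_mul_cast_choose_two (m : ℕ) : 2 * (m.choose 2 : ℤ) = m ^ 2 - m := by
  induction m with
  | zero => rfl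
  | succ m ih =>
    rw [Nat.choose_succ_succ', Nat.choose_one_right]
    push_cast
    linear_combination ih

lemma quadSlice_two_mul (hq : q ≠ 0) (hq1 : ‖q‖ < 1) (m : ℕ) :
    quadSlice q (2 * m) = qPochInf (-q ^ 4) (q ^ 8) ^ 3 *
      ((q ^ 4) ^ (m ^ 2) * qPoch (-q ^ 4) (q ^ 8) m *
        (((q ^ 8) ^ m.choose 2) ^ 2 / qPoch (q ^ 8) (q ^ 8) (2 * m))) := by
  have hshift : q ^ (4 - 4 * ((2 * m : ℕ) : ℤ)) = -(-q ^ 4 / (q ^ 8) ^ m) := by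
    rw [neg_div, neg_neg, ← pow_mul, zpow_sub₀ hq]
    congr 1
    norm_cast
    ring
  have hreflect : q ^ 8 / -q ^ 4 = -q ^ 4 := by
    field_simp
  have hpow : q ^ (5 * ((2 * m : ℕ) : ℤ) ^ 2 - 4 * (2 * m : ℕ)) * (-q ^ 4) ^ (2 * m) =
      (q ^ 4) ^ (m ^ 2) * ((q ^ 8) ^ m.choose 2) ^ 2 * (q ^ 8) ^ (m * (m + 1)) := by
    rw [pow_mul (-q ^ 4), neg_sq]
    simp only [← zpow_natCast, ← zpow_mul, ← zpow_add₀ hq]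
    congr 1
    push_cast
    linear_combination -8 * two_mul_cast_choose_two m
  rw [quadSlice_eq_qPoch_mul (neg_ne_zero.mpr (pow_ne_zero 4 hq)) hq hq1 hshift, hreflect]
  have := pow_ne_zero (m * (m + 1)) (pow_ne_zero 8 hq)
  field_simp
  linear_combination qPoch (-q ^ 4) (q ^ 8) m * qPochInf (-q ^ 4) (q ^ 8) ^ 3 /
    qPoch (q ^ 8) (q ^ 8) (2 * m) * hpow

lemma quadSlice_two_mul_add_one (hq : q ≠ 0) (hq1 : ‖q‖ < 1) (m : ℕ) :
    quadSlice q (2 * m + 1) = 4 * q * qPochInf (-q ^ 8) (q ^ 8) ^ 3 *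
      ((q ^ 8) ^ (m ^ 2 + m) *
        ((q ^ 8) ^ m.choose 2 * qPoch (-q ^ 8) (q ^ 8) m / qPoch (q ^ 8) (q ^ 8) (2 * m + 1))) := by
  have hshift : q ^ (4 - 4 * ((2 * m + 1 : ℕ) : ℤ)) = -(-1 / (q ^ 8) ^ m) := by
    rw [neg_div, neg_neg, ← pow_mul, one_div, ← zpow_natCast, ← zpow_neg]
    congr 1
    push_cast
    ring
  have hreflect : q ^ 8 / -1 = -q ^ 8 := by
    rw [div_neg, div_one]
  have hpow : q ^ (5 * ((2 * m + 1 : ℕ) : ℤ) ^ 2 - 4 * (2 * m + 1 : ℕ)) =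
      q * ((q ^ 8) ^ (m ^ 2 + m) * (q ^ 8) ^ m.choose 2) * (q ^ 8) ^ (m * (m + 1)) := by
    nth_rw 2 [← zpow_one q]
    simp only [← zpow_natCast, ← zpow_mul, ← zpow_add₀ hq]
    congr 1
    push_cast
    linear_combination -4 * two_mul_cast_choose_two m
  rw [quadSlice_eq_qPoch_mul (neg_ne_zero.mpr one_ne_zero) hq hq1 hshift, hreflect, hpow,
    qPochInf_neg_one_left (norm_pow_lt_one hq1 (by lia)), (even_two_mul m).neg_one_pow]
  have := pow_ne_zero (m * (m + 1)) (pow_ne_zero 8 hq)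
  field_simp
  ring

theorem tsum_quadTerm (hq : q ≠ 0) (hq1 : ‖q‖ < 1) :
    ∑' x : ℕ × ℕ × ℕ × ℕ, quadTerm q x.1 x.2.1 x.2.2.1 x.2.2.2 =
      qPochInf (-q ^ 4) (q ^ 8) ^ 4 / J q 8 *
          (qTheta (-q ^ 76) (q ^ 120) - q ^ 12 * qTheta (-q ^ 116) (q ^ 120)) +
        4 * q * qPochInf (-q ^ 8) (q ^ 8) ^ 3 * (qTheta (q ^ 48) (q ^ 80) / J q 8) := by
  have hslice := hasSum_quadSlice hq hq1
  have heven : Summable fun m ↦ quadSlice q (2 * m) :=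
    hslice.summable.comp_injective (mul_right_injective₀ two_ne_zero)
  have hodd : Summable fun m ↦ quadSlice q (2 * m + 1) :=
    hslice.summable.comp_injective (i := fun m ↦ 2 * m + 1) fun a b h ↦ by lia
  have hslater_even := tsum_slater_even (pow_ne_zero 4 hq) (norm_pow_lt_one hq1 four_ne_zero)
  have hslater_odd := tsum_slater_odd (pow_ne_zero 8 hq) (norm_pow_lt_one hq1 (by lia : 8 ≠ 0))
  simp only [show (q ^ 4) ^ 2 = q ^ 8 by ring] at hslater_even
  rw [← hslice.tsum_eq, ← tsum_even_add_odd heven hodd]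
  simp only [quadSlice_two_mul hq hq1, quadSlice_two_mul_add_one hq hq1, tsum_mul_left,
    hslater_even, hslater_odd]
  simp only [← pow_mul, J]
  ring

end QuadrupleSum

section ThetaQuotients

variable {q : ℂ}

lemma J_ne_zero (hq1 : ‖q‖ < 1) {m : ℕ} (hm : m ≠ 0) : J q m ≠ 0 :=
  qPochInf_ne_zero_of_norm_lt_one (norm_pow_lt_one hq1 hm) (norm_pow_lt_one hq1 hm)

lemma Jam_eq_qTheta (hq : q ≠ 0) (hq1 : ‖q‖ < 1) {a m : ℕ} (hm : m ≠ 0) (ham : a ≤ m) :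
    Jam q a m = qTheta (q ^ a) (q ^ m) := by
  rw [Jam, qTheta_eq_prod (pow_ne_zero a hq) (pow_ne_zero m hq) (norm_pow_lt_one hq1 hm),
    pow_sub₀ q hq ham, div_eq_mul_inv]

lemma qTheta_pow_sub (hq : q ≠ 0) {a m : ℕ} (ham : a ≤ m) :
    qTheta (q ^ (m - a)) (q ^ m) = qTheta (q ^ a) (q ^ m) := by
  rw [pow_sub₀ q hq ham, ← div_eq_mul_inv, qTheta_div_left (pow_ne_zero m hq)]

lemma Jam_mul_Jam (hq : q ≠ 0) (hq1 : ‖q‖ < 1) :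
    Jam q 12 40 * Jam q 16 80 =
      J q 80 * (qTheta (-q ^ 76) (q ^ 120) - q ^ 12 * qTheta (-q ^ 116) (q ^ 120)) := by
  have h := qTheta_mul_qTheta (pow_ne_zero 12 hq) (pow_ne_zero 40 hq)
    (norm_pow_lt_one hq1 (by lia : 40 ≠ 0))
  simp only [← pow_mul, ← pow_add, Nat.reduceMul, Nat.reduceAdd] at h
  rw [Jam_eq_qTheta hq hq1 (by lia) (by lia), Jam_eq_qTheta hq hq1 (by lia) (by lia),
    ← qTheta_pow_sub hq (by lia : 16 ≤ 80), J, ← h]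

lemma qPochInf_neg_pow_mul_two (hq1 : ‖q‖ < 1) {m : ℕ} (hm : m ≠ 0) :
    qPochInf (-q ^ m) (q ^ (2 * m)) = J q (2 * m) ^ 2 / (J q m * J q (4 * m)) := by
  have h := qPochInf_neg_sq_mul (norm_pow_lt_one hq1 hm)
  rw [eq_div_iff (mul_ne_zero (J_ne_zero hq1 hm) (J_ne_zero hq1 (by lia)))]
  simpa only [J, ← pow_mul, mul_comm m] using h

lemma qPochInf_neg_pow_self (hq1 : ‖q‖ < 1) {m : ℕ} (hm : m ≠ 0) :
    qPochInf (-q ^ m) (q ^ m) = J q (2 * m) / J q m := by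
  have h := qPochInf_neg_self_mul (norm_pow_lt_one hq1 hm)
  rw [eq_div_iff (J_ne_zero hq1 hm)]
  simpa only [J, ← pow_mul, mul_comm m] using h

end ThetaQuotients

theorem stmt_18 (q : ℂ) (h0 : 0 < ‖q‖) (h1 : ‖q‖ < 1) :
    (∑' p : ℕ × ℕ × ℕ × ℕ,
      (fun (i j k l : ℕ) =>
        q ^ ((4*(i:ℤ)^2 + 4*(j:ℤ)^2 + 4*(k:ℤ)^2 + 5*(l:ℤ)^2 - 4*(i:ℤ)*(l:ℤ) - 4*(j:ℤ)*(l:ℤ) + 4*(k:ℤ)*(l:ℤ) - 4*(l:ℤ)) : ℤ) /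
          (qPoch (q ^ 8) (q ^ 8) i * qPoch (q ^ 8) (q ^ 8) j * qPoch (q ^ 8) (q ^ 8) k * qPoch (q ^ 8) (q ^ 8) l))
        p.1 p.2.1 p.2.2.1 p.2.2.2)
    = (J q 8)^7 * Jam q 12 40 * Jam q 16 80 / ((J q 4)^4 * (J q 16)^4 * J q 80)
      + 4 * q * (J q 16)^3 * Jam q 32 80 / (J q 8)^4 := by
  have hq : q ≠ 0 := norm_pos_iff.mp h0
  have h8 := J_ne_zero h1 (by lia : 8 ≠ 0)
  have h80 := J_ne_zero h1 (by lia : 80 ≠ 0)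
  have heven : qPochInf (-q ^ 4) (q ^ 8) = J q 8 ^ 2 / (J q 4 * J q 16) :=
    qPochInf_neg_pow_mul_two h1 four_ne_zero
  have hodd : qPochInf (-q ^ 8) (q ^ 8) = J q 16 / J q 8 := qPochInf_neg_pow_self h1 (by lia)
  have htheta : qTheta (q ^ 48) (q ^ 80) = Jam q 32 80 := by
    rw [Jam_eq_qTheta hq h1 (by lia) (by lia), ← qTheta_pow_sub hq (by lia)]
  refine (tsum_quadTerm hq h1).trans ?_
  rw [heven, hodd, htheta, mul_assoc (J q 8 ^ 7), Jam_mul_Jam hq h1]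
  field_simp
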